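/- arXiv:2605.24472 — 6 statements merged into one kernel-verified Lean document; each statement's English description precedes it below -/
import Mathlib

section
/- Let V : ℝⁿ → ℝ (n ≥ 2) be continuous and let μ be the measure with density e^{-V} with respect to the Lebesgue measure; assume μ is finite. Let F : ℝⁿ → (0, ∞) be continuous. Then inf over all convex bodies K in ℝⁿ containing the origin of (1/μ(K)) ∫_K F dμ equals inf over θ in the unit sphere S^{n-1} of inf over R > 0 of (∫_0^R F(rθ) r^{n-1} e^{-V(rθ)} dr) / (∫_0^R r^{n-1} e^{-V(rθ)} dr). -/
open MeasureTheory Real Set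

/-!
In polar coordinates the integral of `g` over a convex body `K ∋ 0` is the integral over the unit
sphere of the weighted ray integrals of `g`, each stopped where the ray leaves `K`. Applied to
`g = w * (F - m)`, where `w` is the density, this shows that a lower bound `m` of all ray averages
of `F` is a lower bound of all body averages. Conversely, ray integrals of continuous functions
depend continuously on the direction, so if the average of `F` along a segment `[0, R • θ]` is
less than `M`, then it is less than `M` along all segments of length `R` in directions near `θ`.
A thin convex cone around `θ` cut off at radius `R` is a convex body made of such segments.
-/

/-- For `s` empty or unbounded below, both sides are the junk value `0`. -/
theorem sSup_lowerBounds_eq_real_sInf (s : Set ℝ) : sSup (lowerBounds s) = sInf s := by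
  rcases s.eq_empty_or_nonempty with rfl | hs
  · simp
  by_cases hb : BddBelow s
  · exact csSup_lowerBounds_eq_csInf hb hs
  · rw [Real.sInf_of_not_bddBelow hb, not_nonempty_iff_eq_empty.1 hb, Real.sSup_empty]

section WeightedAverage

variable {α : Type*} [MeasurableSpace α] {ν : Measure α} {w F : α → ℝ}

theorem integral_mul_sub_const_eq_mul_div_sub (hw : Integrable w ν)
    (hFw : Integrable (fun x => F x * w x) ν) (hw0 : ∫ x, w x ∂ν ≠ 0) (m : ℝ) :
    ∫ x, w x * (F x - m) ∂ν =
      (∫ x, w x ∂ν) * ((∫ x, F x * w x ∂ν) / (∫ x, w x ∂ν) - m) := by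
  calc ∫ x, w x * (F x - m) ∂ν = ∫ x, F x * w x - m * w x ∂ν := by congr with x; ring
    _ = (∫ x, F x * w x ∂ν) - m * ∫ x, w x ∂ν := by
      rw [integral_sub hFw (hw.const_mul m), integral_const_mul]
    _ = _ := by field_simp

theorem setAverage_withDensity_ofReal {s : Set α} (hs : MeasurableSet s) (hw : Measurable w)
    (hw0 : ∀ x, 0 ≤ w x) :
    ⨍ x in s, F x ∂ν.withDensity (fun x => ENNReal.ofReal (w x)) =
      (∫ x in s, F x * w x ∂ν) / ∫ x in s, w x ∂ν := by
  have setIntegral_eq (f : α → ℝ) :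
      ∫ x in s, f x ∂ν.withDensity (fun x => ENNReal.ofReal (w x)) = ∫ x in s, f x * w x ∂ν := by
    rw [setIntegral_withDensity_eq_setIntegral_toReal_smul (by fun_prop) (by simp) _ hs]
    simp [ENNReal.toReal_ofReal (hw0 _), mul_comm]
  have measureReal_eq : (ν.withDensity fun x => ENNReal.ofReal (w x)).real s =
      ∫ x in s, w x ∂ν := by
    simpa using setIntegral_eq fun _ => 1
  rw [setAverage_eq, setIntegral_eq, measureReal_eq, smul_eq_mul, inv_mul_eq_div]

end WeightedAverage

section OpenPosMeasure

variable {X : Type*} [TopologicalSpace X] [T2Space X] [MeasurableSpace X] [BorelSpace X]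
  (ν : Measure X) [IsFiniteMeasureOnCompacts ν] [ν.IsOpenPosMeasure] {w F : X → ℝ} {K : Set X}

theorem setIntegral_pos_of_interior_nonempty (hw : Continuous w) (hwpos : ∀ x, 0 < w x)
    (hK : IsCompact K) (hKint : (interior K).Nonempty) : 0 < ∫ x in K, w x ∂ν := by
  rw [setIntegral_pos_iff_support_of_nonneg_ae (.of_forall fun x => (hwpos x).le)
    (hw.continuousOn.integrableOn_compact hK),
    Function.support_eq_univ fun x => (hwpos x).ne', univ_inter]
  exact Measure.measure_pos_of_nonempty_interior ν hKint

theorem setIntegral_mul_sub_const (hw : Continuous w) (hwpos : ∀ x, 0 < w x) (hF : Continuous F)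
    (hK : IsCompact K) (hKint : (interior K).Nonempty) (m : ℝ) :
    ∫ x in K, w x * (F x - m) ∂ν = (∫ x in K, w x ∂ν) *
      (⨍ x in K, F x ∂ν.withDensity (fun x => ENNReal.ofReal (w x)) - m) := by
  rw [setAverage_withDensity_ofReal hK.measurableSet hw.measurable fun x => (hwpos x).le]
  exact integral_mul_sub_const_eq_mul_div_sub (hw.continuousOn.integrableOn_compact hK)
    ((hF.mul hw).continuousOn.integrableOn_compact hK)
    (setIntegral_pos_of_interior_nonempty ν hw hwpos hK hKint).ne' m

end OpenPosMeasure

section RadialFunction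

variable {E : Type*} [NormedAddCommGroup E] [NormedSpace ℝ E] {K : Set E} {x : E} {r : ℝ}

/-- The radial function `ρ_K` of a set `K`: for `K` compact and star-shaped about `0`, the ray
through `x ≠ 0` leaves `K` at `ρ_K(x) • x`. -/
noncomputable def radialFunction (K : Set E) (x : E) : ℝ := sSup {r : ℝ | r • x ∈ K}

theorem isCompact_setOf_smul_mem (hK : IsCompact K) (hx : x ≠ 0) :
    IsCompact {r : ℝ | r • x ∈ K} :=
  (isClosedEmbedding_smul_left hx).isCompact_preimage hK

theorem smul_mem_iff_le_radialFunction (hK : IsCompact K) (hKstar : StarConvex ℝ 0 K)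
    (h0 : 0 ∈ K) (hx : x ≠ 0) (hr : 0 < r) : r • x ∈ K ↔ r ≤ radialFunction K x := by
  have hcompact := isCompact_setOf_smul_mem hK hx
  refine ⟨fun hrK => le_csSup hcompact.bddAbove hrK, fun hle => ?_⟩
  have exit_mem : radialFunction K x • x ∈ K := hcompact.sSup_mem ⟨0, by simpa using h0⟩
  have exit_pos : 0 < radialFunction K x := hr.trans_le hle
  have := hKstar.smul_mem exit_mem (by positivity) ((div_le_one exit_pos).2 hle)
  rwa [smul_smul, div_mul_cancel₀ _ exit_pos.ne'] at this

end RadialFunction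

section PolarCoordinates

variable {E : Type*} [NormedAddCommGroup E] [NormedSpace ℝ E]

/-- The integral of `g` along the segment from `0` to `R • θ` against `r ^ (dim E - 1) dr`, the
radial factor of Lebesgue measure in polar coordinates. It vanishes for `R ≤ 0`. -/
noncomputable def radialIntegral (g : E → ℝ) (θ : E) (R : ℝ) : ℝ :=
  ∫ r in Ioo 0 R, r ^ (Module.finrank ℝ E - 1) * g (r • θ)

theorem radialIntegral_of_nonpos (g : E → ℝ) (θ : E) {R : ℝ} (hR : R ≤ 0) :
    radialIntegral g θ R = 0 := by
  simp [radialIntegral, Ioo_eq_empty_of_le hR]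

theorem radialIntegral_eq_intervalIntegral (g : E → ℝ) (θ : E) {R : ℝ} (hR : 0 ≤ R) :
    radialIntegral g θ R = ∫ r in 0..R, r ^ (Module.finrank ℝ E - 1) * g (r • θ) := by
  rw [radialIntegral, ← integral_Ioc_eq_integral_Ioo, intervalIntegral.integral_of_le hR]

theorem continuous_radialIntegral {g : E → ℝ} (hg : Continuous g) (R : ℝ) :
    Continuous fun θ => radialIntegral g θ R := by
  rcases le_total R 0 with hR | hR
  · simpa only [radialIntegral_of_nonpos g _ hR] using continuous_const
  · simp only [radialIntegral_eq_intervalIntegral g _ hR]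
    exact intervalIntegral.continuous_parametric_intervalIntegral_of_continuous'
      (by fun_prop) _ _

theorem radialIntegral_pos {g : E → ℝ} (hg : Continuous g) (hgpos : ∀ x, 0 < g x) (θ : E) {R : ℝ}
    (hR : 0 < R) : 0 < radialIntegral g θ R := by
  rw [radialIntegral_eq_intervalIntegral g θ hR.le]
  refine intervalIntegral.intervalIntegral_pos_of_pos_on
    (Continuous.intervalIntegrable (by fun_prop) _ _) (fun r hr => ?_) hR
  exact mul_pos (pow_pos hr.1 _) (hgpos _)

theorem radialIntegral_mul_sub_const {w F : E → ℝ} (hw : Continuous w) (hwpos : ∀ x, 0 < w x)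
    (hF : Continuous F) (θ : E) {R : ℝ} (hR : 0 < R) (m : ℝ) :
    radialIntegral (fun x => w x * (F x - m)) θ R = radialIntegral w θ R *
      (radialIntegral (fun x => F x * w x) θ R / radialIntegral w θ R - m) := by
  have integrableOn_Ioo {f : ℝ → ℝ} (hf : Continuous f) : IntegrableOn f (Ioo 0 R) :=
    hf.integrableOn_Icc.mono_set Ioo_subset_Icc_self
  have h := integral_mul_sub_const_eq_mul_div_sub (ν := volume.restrict (Ioo 0 R))
    (w := fun r : ℝ => r ^ (Module.finrank ℝ E - 1) * w (r • θ)) (F := fun r => F (r • θ))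
    (integrableOn_Ioo (by fun_prop)) (integrableOn_Ioo (by fun_prop))
    (radialIntegral_pos hw hwpos θ hR).ne' m
  simpa only [radialIntegral, mul_assoc, mul_left_comm (F _)] using h

theorem integral_volumeIoiPow {G : Type*} [NormedAddCommGroup G] [NormedSpace ℝ G] (k : ℕ)
    (f : ℝ → G) : ∫ r, f r ∂Measure.volumeIoiPow k = ∫ r in Ioi (0 : ℝ), r ^ k • f r := by
  rw [Measure.volumeIoiPow, integral_withDensity_eq_integral_toReal_smul (by fun_prop) (by simp),
    ← integral_subtype_comap measurableSet_Ioi fun r => r ^ k • f r]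
  congr with r
  rw [ENNReal.toReal_ofReal (pow_nonneg r.2.out.le k)]

variable [FiniteDimensional ℝ E] [Nontrivial E] [MeasurableSpace E] [BorelSpace E]
  (ν : Measure E) [ν.IsAddHaarMeasure]

theorem integral_eq_integral_toSphere_integral_Ioi {G : Type*} [NormedAddCommGroup G]
    [NormedSpace ℝ G] {f : E → G} (hf : Integrable f ν) :
    ∫ x, f x ∂ν = ∫ θ : Metric.sphere (0 : E) 1,
      (∫ r in Ioi (0 : ℝ), r ^ (Module.finrank ℝ E - 1) • f (r • θ.1)) ∂ν.toSphere := by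
  let polarMap (p : Metric.sphere (0 : E) 1 × Ioi (0 : ℝ)) : E := p.2.1 • p.1.1
  have polarMap_homeomorph (x : ({0}ᶜ : Set E)) :
      polarMap (homeomorphUnitSphereProd E x) = x := by
    simp [polarMap, smul_smul, norm_ne_zero_iff.2 x.2]
  have preserving := ν.measurePreserving_homeomorphUnitSphereProd
  have embedding := (homeomorphUnitSphereProd E).measurableEmbedding
  have integrable_polar : Integrable (fun p => f (polarMap p))
      (ν.toSphere.prod (.volumeIoiPow (Module.finrank ℝ E - 1))) := by
    rw [← preserving.integrable_comp_emb embedding]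
    simp only [Function.comp_def, polarMap_homeomorph]
    exact (integrableOn_iff_comap_subtypeVal (measurableSet_singleton _).compl).1 hf.integrableOn
  calc ∫ x, f x ∂ν = ∫ x : ({0}ᶜ : Set E), f x ∂ν.comap (↑) := by
        rw [integral_subtype_comap (measurableSet_singleton _).compl, restrict_compl_singleton]
    _ = ∫ p, f (polarMap p) ∂ν.toSphere.prod (.volumeIoiPow (Module.finrank ℝ E - 1)) := by
        simpa only [Function.comp_apply, polarMap_homeomorph] using
          preserving.integral_comp embedding (f ∘ polarMap)
    _ = _ := by
        rw [integral_prod _ integrable_polar]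
        congr with θ
        exact integral_volumeIoiPow _ fun r => f (r • θ.1)

theorem setIntegral_eq_integral_toSphere_radialIntegral {K : Set E} (hK : IsCompact K)
    (hKstar : StarConvex ℝ 0 K) (h0 : 0 ∈ K) {g : E → ℝ} (hg : IntegrableOn g K ν) :
    ∫ x in K, g x ∂ν =
      ∫ θ : Metric.sphere (0 : E) 1, radialIntegral g θ (radialFunction K θ) ∂ν.toSphere := by
  rw [← integral_indicator hK.measurableSet, integral_eq_integral_toSphere_integral_Ioi ν
    (hg.integrable_indicator hK.measurableSet)]
  congr with θ
  rw [radialIntegral, ← integral_Ioc_eq_integral_Ioo, ← integral_indicator measurableSet_Ioi,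
    ← integral_indicator measurableSet_Ioc]
  congr with r
  by_cases hr : 0 < r
  · have hmem := smul_mem_iff_le_radialFunction hK hKstar h0 (ne_zero_of_mem_unit_sphere θ) hr
    simp [indicator, hr, hmem]
  · simp [hr]

end PolarCoordinates

section ConvexBodies

variable {E : Type*} [NormedAddCommGroup E] [NormedSpace ℝ E]

variable (E) in
/-- The convex bodies in `E` containing the origin. -/
def convexBodiesAtZero : Set (Set E) :=
  {K | IsCompact K ∧ Convex ℝ K ∧ (interior K).Nonempty ∧ 0 ∈ K}

/-- A convex cone around the ray through `θ`, cut off at radius `R`. The functional `ℓ` is meant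
to have norm `1` and `ℓ θ = 1`, so that `ℓ x • θ` is a projection of `x` to the line through `θ`
and `δ` bounds the aperture. -/
def truncatedCone (ℓ : StrongDual ℝ E) (θ : E) (δ R : ℝ) : Set E :=
  {x | ‖x - ℓ x • θ‖ ≤ δ * ℓ x} ∩ Metric.closedBall 0 R

variable {ℓ : StrongDual ℝ E} {θ φ : E} {δ R : ℝ}

theorem convex_truncatedCone (ℓ : StrongDual ℝ E) (θ : E) (δ R : ℝ) :
    Convex ℝ (truncatedCone ℓ θ δ R) := by
  refine Convex.inter (fun x hx y hy a b ha hb _ => ?_) (convex_closedBall 0 R)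
  rw [mem_ofPred_eq] at hx hy ⊢
  calc ‖a • x + b • y - ℓ (a • x + b • y) • θ‖
      = ‖a • (x - ℓ x • θ) + b • (y - ℓ y • θ)‖ := by
        congr 1; simp only [map_add, map_smul, smul_eq_mul]; module
    _ ≤ a * ‖x - ℓ x • θ‖ + b * ‖y - ℓ y • θ‖ := by
        refine (norm_add_le _ _).trans_eq ?_
        rw [norm_smul_of_nonneg ha, norm_smul_of_nonneg hb]
    _ ≤ a * (δ * ℓ x) + b * (δ * ℓ y) := by gcongr
    _ = δ * ℓ (a • x + b • y) := by simp only [map_add, map_smul, smul_eq_mul]; ring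

theorem interior_truncatedCone_nonempty (hθ : ‖θ‖ = 1) (hℓθ : ℓ θ = 1) (hδ : 0 < δ) (hR : 0 < R) :
    (interior (truncatedCone ℓ θ δ R)).Nonempty := by
  let U : Set E := {x | ‖x - ℓ x • θ‖ < δ * ℓ x} ∩ Metric.ball 0 R
  have hU : IsOpen U := (isOpen_lt (by fun_prop) (by fun_prop)).inter Metric.isOpen_ball
  have hU_subset : U ⊆ truncatedCone ℓ θ δ R :=
    inter_subset_inter (fun _ => le_of_lt (α := ℝ)) Metric.ball_subset_closedBall
  refine ⟨(R / 2) • θ, interior_maximal hU_subset hU ⟨?_, ?_⟩⟩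
  · simp [hℓθ, hδ, hR]
  · simp [norm_smul, hθ, abs_of_pos hR, hR]

theorem truncatedCone_mem_convexBodiesAtZero [FiniteDimensional ℝ E] (hθ : ‖θ‖ = 1)
    (hℓθ : ℓ θ = 1) (hδ : 0 < δ) (hR : 0 < R) :
    truncatedCone ℓ θ δ R ∈ convexBodiesAtZero E := by
  have : ProperSpace E := FiniteDimensional.proper_real E
  refine ⟨(isCompact_closedBall 0 R).inter_left (isClosed_le (by fun_prop) (by fun_prop)),
    convex_truncatedCone ℓ θ δ R, interior_truncatedCone_nonempty hθ hℓθ hδ hR, ?_⟩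
  simp [truncatedCone, hR.le]

theorem smul_mem_truncatedCone_iff (hφ : ‖φ‖ = 1) {r : ℝ} (hr : 0 < r) :
    r • φ ∈ truncatedCone ℓ θ δ R ↔ ‖φ - ℓ φ • θ‖ ≤ δ * ℓ φ ∧ r ≤ R := by
  have hsub : r • φ - ℓ (r • φ) • θ = r • (φ - ℓ φ • θ) := by
    rw [map_smul, smul_eq_mul]; module
  have hcone : ‖r • φ - ℓ (r • φ) • θ‖ ≤ δ * ℓ (r • φ) ↔ ‖φ - ℓ φ • θ‖ ≤ δ * ℓ φ := by
    rw [hsub, norm_smul_of_nonneg hr.le, map_smul, smul_eq_mul, mul_left_comm,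
      mul_le_mul_iff_right₀ hr]
  simp only [truncatedCone, mem_inter_iff, mem_ofPred_eq, hcone, mem_closedBall_zero_iff,
    norm_smul_of_nonneg hr.le, hφ, mul_one]

theorem norm_sub_le_two_mul_of_norm_sub_smul_le (hℓ : ‖ℓ‖ ≤ 1) (hθ : ‖θ‖ = 1) (hφ : ‖φ‖ = 1)
    (hδ : 0 < δ) (hcone : ‖φ - ℓ φ • θ‖ ≤ δ * ℓ φ) : ‖φ - θ‖ ≤ 2 * δ := by
  have hℓφ : ℓ φ ≤ 1 := by
    simpa [hφ] using (le_abs_self _).trans (ℓ.le_of_opNorm_le hℓ φ)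
  have hdist : ‖φ - ℓ φ • θ‖ ≤ δ := hcone.trans (mul_le_of_le_one_right hδ.le hℓφ)
  have hsmul (c : ℝ) : ‖c • θ‖ = |c| := by rw [norm_smul, hθ, mul_one, norm_eq_abs]
  have hℓφ_nonneg : 0 ≤ ℓ φ :=
    (mul_nonneg_iff_of_pos_left hδ).1 ((norm_nonneg _).trans hcone)
  have hlower : 1 - ℓ φ ≤ δ := by
    have := (norm_sub_norm_le φ (ℓ φ • θ)).trans hdist
    rwa [hφ, hsmul, abs_of_nonneg hℓφ_nonneg] at this
  calc ‖φ - θ‖ = ‖(φ - ℓ φ • θ) + (ℓ φ - 1) • θ‖ := by congr 1; module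
    _ ≤ ‖φ - ℓ φ • θ‖ + ‖(ℓ φ - 1) • θ‖ := norm_add_le _ _
    _ = ‖φ - ℓ φ • θ‖ + (1 - ℓ φ) := by rw [hsmul, abs_of_nonpos (by linarith), neg_sub]
    _ ≤ 2 * δ := by linarith

theorem radialFunction_truncatedCone_of_pos [FiniteDimensional ℝ E] (hθ : ‖θ‖ = 1)
    (hℓθ : ℓ θ = 1) (hδ : 0 < δ) (hR : 0 < R) (hφ : ‖φ‖ = 1)
    (hpos : 0 < radialFunction (truncatedCone ℓ θ δ R) φ) :
    ‖φ - ℓ φ • θ‖ ≤ δ * ℓ φ ∧ radialFunction (truncatedCone ℓ θ δ R) φ = R := by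
  obtain ⟨hK, hKconvex, -, h0⟩ := truncatedCone_mem_convexBodiesAtZero hθ hℓθ hδ hR
  have hφ0 : φ ≠ 0 := ne_zero_of_norm_ne_zero (by simp [hφ])
  have le_iff {r : ℝ} (hr : 0 < r) :
      r ≤ radialFunction (truncatedCone ℓ θ δ R) φ ↔ ‖φ - ℓ φ • θ‖ ≤ δ * ℓ φ ∧ r ≤ R := by
    rw [← smul_mem_iff_le_radialFunction hK (hKconvex.starConvex h0) h0 hφ0 hr,
      smul_mem_truncatedCone_iff hφ hr]
  obtain ⟨hcone, hle⟩ := (le_iff hpos).1 le_rfl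
  exact ⟨hcone, hle.antisymm ((le_iff hR).2 ⟨hcone, le_rfl⟩)⟩

end ConvexBodies

section Comparison

variable {E : Type*} [NormedAddCommGroup E] [NormedSpace ℝ E] [MeasurableSpace E]
  [BorelSpace E] {w F g : E → ℝ} {K : Set E}

variable [FiniteDimensional ℝ E] [Nontrivial E] (ν : Measure E) [ν.IsAddHaarMeasure]

theorem setIntegral_nonneg_of_radialIntegral_nonneg (hK : IsCompact K)
    (hKstar : StarConvex ℝ 0 K) (h0 : 0 ∈ K) (hg : IntegrableOn g K ν)
    (hnonneg : ∀ θ : E, ‖θ‖ = 1 → ∀ R, 0 < R → 0 ≤ radialIntegral g θ R) :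
    0 ≤ ∫ x in K, g x ∂ν := by
  rw [setIntegral_eq_integral_toSphere_radialIntegral ν hK hKstar h0 hg]
  refine integral_nonneg fun θ => ?_
  rcases le_or_gt (radialFunction K (θ : E)) 0 with hρ | hρ
  · exact (radialIntegral_of_nonpos g _ hρ).ge
  · exact hnonneg θ (norm_eq_of_mem_sphere θ) _ hρ

theorem exists_mem_convexBodiesAtZero_setIntegral_nonpos (hg : Continuous g) {θ : E}
    (hθ : ‖θ‖ = 1) {R : ℝ} (hR : 0 < R) (hneg : radialIntegral g θ R < 0) :
    ∃ K ∈ convexBodiesAtZero E, ∫ x in K, g x ∂ν ≤ 0 := by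
  obtain ⟨δ, hδ, hneg_near⟩ : ∃ δ > 0, ∀ φ, ‖φ - θ‖ ≤ 2 * δ → radialIntegral g φ R < 0 := by
    have hnhds := (continuous_radialIntegral hg R).continuousAt.eventually_lt_const hneg
    obtain ⟨ε, hε, hball⟩ := Metric.nhds_basis_closedBall.eventually_iff.1 hnhds
    exact ⟨ε / 2, half_pos hε, fun φ hφ => hball (by rw [mem_closedBall_iff_norm]; linarith)⟩
  obtain ⟨ℓ, hℓ, hℓθ⟩ := exists_dual_vector'' ℝ θ
  replace hℓθ : ℓ θ = 1 := by simpa [hθ] using hℓθ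
  have hK_mem@⟨hK, hKconvex, _, h0⟩ := truncatedCone_mem_convexBodiesAtZero hθ hℓθ hδ hR
  refine ⟨_, hK_mem, ?_⟩
  rw [setIntegral_eq_integral_toSphere_radialIntegral ν hK (hKconvex.starConvex h0) h0
    (hg.continuousOn.integrableOn_compact hK)]
  refine integral_nonpos fun φ => ?_
  have hφ : ‖(φ : E)‖ = 1 := norm_eq_of_mem_sphere φ
  rcases le_or_gt (radialFunction (truncatedCone ℓ θ δ R) (φ : E)) 0 with hρ | hρ
  · exact (radialIntegral_of_nonpos g _ hρ).le
  · obtain ⟨hcone, hρR⟩ := radialFunction_truncatedCone_of_pos hθ hℓθ hδ hR hφ hρ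
    simp only [hρR]
    exact (hneg_near φ (norm_sub_le_two_mul_of_norm_sub_smul_le hℓ hθ hφ hδ hcone)).le

/-- Equality of the sets of lower bounds is equality of the infima in `EReal`, whereas the real
`sInf` has the junk value `0` when the averages are unbounded below. -/
theorem stmt_4_general (hw : Continuous w) (hwpos : ∀ x, 0 < w x) (hF : Continuous F) :
    lowerBounds ((fun K => ⨍ x in K, F x ∂ν.withDensity fun x => ENNReal.ofReal (w x)) ''
        convexBodiesAtZero E) =
      lowerBounds {y | ∃ θ : E, ‖θ‖ = 1 ∧ ∃ R, 0 < R ∧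
        y = radialIntegral (fun x => F x * w x) θ R / radialIntegral w θ R} := by
  have excess_continuous (m : ℝ) : Continuous fun x => w x * (F x - m) := by fun_prop
  ext m
  constructor
  · rintro hm _ ⟨θ, hθ, R, hR, rfl⟩
    by_contra! hlt
    obtain ⟨M, hM, hMm⟩ := exists_between hlt
    have hneg : radialIntegral (fun x => w x * (F x - M)) θ R < 0 := by
      rw [radialIntegral_mul_sub_const hw hwpos hF θ hR]
      exact mul_neg_of_pos_of_neg (radialIntegral_pos hw hwpos θ hR) (sub_neg.2 hM)
    obtain ⟨K, hK_mem, hnonpos⟩ :=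
      exists_mem_convexBodiesAtZero_setIntegral_nonpos ν (excess_continuous M) hθ hR hneg
    have ⟨hK, _, hKint, _⟩ := hK_mem
    have hKpos := setIntegral_pos_of_interior_nonempty ν hw hwpos hK hKint
    rw [setIntegral_mul_sub_const ν hw hwpos hF hK hKint] at hnonpos
    have hle_M := sub_nonpos.1 (nonpos_of_mul_nonpos_right hnonpos hKpos)
    exact ((hm (mem_image_of_mem _ hK_mem)).trans hle_M).not_gt hMm
  · rintro hm _ ⟨K, ⟨hK, hKconvex, hKint, h0⟩, rfl⟩
    have hnonneg : 0 ≤ ∫ x in K, w x * (F x - m) ∂ν := by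
      refine setIntegral_nonneg_of_radialIntegral_nonneg ν hK (hKconvex.starConvex h0) h0
        ((excess_continuous m).continuousOn.integrableOn_compact hK) fun θ hθ R hR => ?_
      rw [radialIntegral_mul_sub_const hw hwpos hF θ hR]
      exact mul_nonneg (radialIntegral_pos hw hwpos θ hR).le
        (sub_nonneg.2 (hm ⟨θ, hθ, R, hR, rfl⟩))
    rwa [setIntegral_mul_sub_const ν hw hwpos hF hK hKint, mul_nonneg_iff_of_pos_left
      (setIntegral_pos_of_interior_nonempty ν hw hwpos hK hKint), sub_nonneg] at hnonneg

end Comparison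

theorem stmt_4 (n : ℕ) (hn : 2 ≤ n)
    (V : EuclideanSpace ℝ (Fin n) → ℝ) (hV : Continuous V)
    (μ : Measure (EuclideanSpace ℝ (Fin n)))
    (hμ : μ = volume.withDensity (fun x => ENNReal.ofReal (Real.exp (-V x))))
    (hfin : IsFiniteMeasure μ)
    (F : EuclideanSpace ℝ (Fin n) → ℝ) (hF : Continuous F) (hFpos : ∀ x, 0 < F x) :
    sInf ((fun K => (μ K).toReal⁻¹ * ∫ x in K, F x ∂μ) ''
        {K : Set (EuclideanSpace ℝ (Fin n)) |
          IsCompact K ∧ Convex ℝ K ∧ (interior K).Nonempty ∧ 0 ∈ K}) =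
    sInf {y : ℝ | ∃ θ : EuclideanSpace ℝ (Fin n), ‖θ‖ = 1 ∧ ∃ R : ℝ, 0 < R ∧
        y = (∫ r in Set.Ioo (0 : ℝ) R, F (r • θ) * r ^ (n - 1) * Real.exp (-V (r • θ))) /
            (∫ r in Set.Ioo (0 : ℝ) R, r ^ (n - 1) * Real.exp (-V (r • θ)))} := by
  have : Nonempty (Fin n) := ⟨⟨0, by lia⟩⟩
  simpa only [sSup_lowerBounds_eq_real_sInf, ← hμ, convexBodiesAtZero, setAverage_eq,
    radialIntegral, finrank_euclideanSpace_fin, measureReal_def, smul_eq_mul, mul_left_comm,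
    mul_assoc] using congrArg sSup (stmt_4_general volume (w := fun x => exp (-V x))
      (by fun_prop) (fun x => exp_pos _) hF)
end

section
/- Let n ≥ 2, p > 1, and let V : ℝⁿ → [0, ∞) be a convex p-homogeneous function such that the measure μ with density e^{-V} with respect to the Lebesgue measure is finite. Set α = (1/n) · e^{(p-1)n/p} · ((p-1)n/p)^{n/p} · Γ(1 - n/p, (p-1)n/p). Then for all convex bodies K, L in ℝⁿ containing the origin and all λ ∈ [0,1], one has μ(λK + (1-λ)L)^α ≥ λ·μ(K)^α + (1-λ)·μ(L)^α. -/
open MeasureTheory Real Set Pointwise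

noncomputable def uiGamma (s x : ℝ) : ℝ := ∫ t in Set.Ioi x, t ^ (s - 1) * Real.exp (-t)

open Filter Module Metric
open scoped ENNReal Topology

/-!
Let `ν` be the measure with density `e ^ (-V)`. It is enough to prove, for each `a` below the
exponent `α`, the midpoint concavity of `ν ^ a` for pairs `A`, `B` of bodies of nearly equal
measure: `t ↦ ν ((1 - t) • K + t • L)` is continuous inside `[0, 1]`, so the local inequality
applies to nearby times and propagates to the whole interval, and then `a ↑ α`.

Let `ν B = e ^ ε ν A`. The Knothe map carries `ν` restricted to `A`, rescaled, to `ν` restricted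
to `B`; its Jacobian at `x`, with image `y`, has positive diagonal entries `l i` whose product is
`e ^ (ε + V y - V x)`. For every small tilt `s`, weighted AM-GM gives
`(1 + l i) / 2 ≥ e ^ (-C s²) l i ^ (1 / 2 + s)` for any `C > 2`, while convexity and homogeneity
bound `V` at the midpoint of `x` and `y` by a combination of `V x` and `V y` with weight `1 / 2 + s`
on `V y`. The `V y` terms cancel, and the optimal `s`, which depends on `x`, gains the factor
`1 + ε² / (4 C w x)` with `w = n + p / (p - 1) V`. Writing `1 / w` as a Laplace transform and using
homogeneity once more, the mean of `1 / w` over `A` with respect to `ν` is at least `α`.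
-/

/-! ### Densities on bounded convex open sets -/

/-- `f` is an unnormalised density carried by `U`: it is positive, continuous and bounded on the
nonempty bounded convex open set `U`. The values of `f` outside `U` are irrelevant. Densities of
this kind are stable under slicing and under taking marginals. -/
structure IsConvexDensity {E : Type*} [NormedAddCommGroup E] [NormedSpace ℝ E]
    (f : E → ℝ) (U : Set E) : Prop where
  isOpen : IsOpen U
  convex : Convex ℝ U
  isBounded : Bornology.IsBounded U
  nonempty : U.Nonempty
  continuousOn : ContinuousOn f U
  pos : ∀ x ∈ U, 0 < f x
  bddAbove : BddAbove (f '' U)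

namespace IsConvexDensity

variable {E E' : Type*} [NormedAddCommGroup E] [NormedSpace ℝ E]
  [NormedAddCommGroup E'] [NormedSpace ℝ E'] {f : E → ℝ} {U : Set E}

lemma exists_bound (hf : IsConvexDensity f U) : ∃ M, 0 ≤ M ∧ ∀ x ∈ U, ‖f x‖ ≤ M := by
  obtain ⟨M, hM⟩ := hf.bddAbove
  have bound : ∀ x ∈ U, f x ≤ M := fun x hx => hM (mem_image_of_mem f hx)
  obtain ⟨x₀, hx₀⟩ := hf.nonempty
  refine ⟨M, (hf.pos x₀ hx₀).le.trans (bound x₀ hx₀), fun x hx => ?_⟩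
  rw [Real.norm_of_nonneg (hf.pos x hx).le]
  exact bound x hx

lemma comp_continuousLinearEquiv (hf : IsConvexDensity f U) (e : E' ≃L[ℝ] E) :
    IsConvexDensity (f ∘ e) (e ⁻¹' U) where
  isOpen := hf.isOpen.preimage e.continuous
  convex := hf.convex.linear_preimage e.toLinearEquiv.toLinearMap
  isBounded := by
    rw [← e.image_symm_eq_preimage]
    exact e.symm.lipschitz.isBounded_image hf.isBounded
  nonempty := hf.nonempty.preimage e.surjective
  continuousOn := hf.continuousOn.comp e.continuous.continuousOn (mapsTo_preimage e U)
  pos x hx := hf.pos (e x) hx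
  bddAbove := by
    rw [image_comp, image_preimage_eq U e.surjective]
    exact hf.bddAbove

section Measure

variable [MeasurableSpace E] [BorelSpace E] {μ : Measure E}

lemma integrableOn [ProperSpace E] [IsFiniteMeasureOnCompacts μ] (hf : IsConvexDensity f U) :
    IntegrableOn f U μ := by
  obtain ⟨M, -, hM⟩ := hf.exists_bound
  exact IntegrableOn.of_bound hf.isBounded.measure_lt_top
    (hf.continuousOn.aestronglyMeasurable hf.isOpen.measurableSet) M
    (ae_restrict_of_forall_mem hf.isOpen.measurableSet hM)

lemma setIntegral_pos [ProperSpace E] [IsFiniteMeasureOnCompacts μ] [μ.IsOpenPosMeasure]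
    (hf : IsConvexDensity f U) : 0 < ∫ x in U, f x ∂μ := by
  have support_inter : Function.support f ∩ U = U :=
    inter_eq_right.2 fun x hx => (hf.pos x hx).ne'
  rw [setIntegral_pos_iff_support_of_nonneg_ae
    (ae_restrict_of_forall_mem hf.isOpen.measurableSet fun x hx => (hf.pos x hx).le)
    hf.integrableOn, support_inter]
  exact hf.isOpen.measure_pos μ hf.nonempty

end Measure

end IsConvexDensity

lemma setIntegral_slice_eq_integral_indicator {α β : Type*} [MeasurableSpace β] {ν : Measure β}
    {U : Set (α × β)} {a : α} (hU : MeasurableSet (Prod.mk a ⁻¹' U)) (f : α × β → ℝ) :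
    ∫ x in Prod.mk a ⁻¹' U, f (a, x) ∂ν = ∫ x, U.indicator f (a, x) ∂ν := by
  rw [← integral_indicator hU]
  rfl

section SliceIntegrals

variable {α β : Type*} [MeasurableSpace α] [MeasurableSpace β] {μ : Measure α} {ν : Measure β}
  {U : Set (α × β)}

lemma setLIntegral_prod_eq_lintegral_slice [SFinite ν] (hU : MeasurableSet U)
    (hU₁ : MeasurableSet (Prod.fst '' U)) {Φ : α × β → ℝ≥0∞} (hΦ : Measurable Φ) :
    ∫⁻ z in U, Φ z ∂μ.prod ν =
      ∫⁻ a in Prod.fst '' U, ∫⁻ x in Prod.mk a ⁻¹' U, Φ (a, x) ∂ν ∂μ := by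
  rw [← lintegral_indicator hU, lintegral_prod _ (hΦ.indicator hU).aemeasurable,
    ← lintegral_indicator hU₁]
  refine lintegral_congr fun a => ?_
  by_cases ha : a ∈ Prod.fst '' U
  · rw [indicator_of_mem ha, ← lintegral_indicator (measurable_prodMk_left hU)]
    rfl
  · rw [indicator_of_notMem ha]
    refine lintegral_eq_zero_of_ae_eq_zero (Eventually.of_forall fun x => ?_)
    exact indicator_of_notMem (fun hx => ha ⟨(a, x), hx, rfl⟩) Φ

lemma setIntegral_prod_eq_integral_slice [SFinite μ] [SFinite ν] (hU : MeasurableSet U)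
    (hU₁ : MeasurableSet (Prod.fst '' U)) {f : α × β → ℝ} (hf : IntegrableOn f U (μ.prod ν)) :
    ∫ z in U, f z ∂μ.prod ν =
      ∫ a in Prod.fst '' U, ∫ x in Prod.mk a ⁻¹' U, f (a, x) ∂ν ∂μ := by
  rw [← integral_indicator hU, integral_prod _ ((integrable_indicator_iff hU).2 hf),
    ← integral_indicator hU₁]
  refine integral_congr_ae (Eventually.of_forall fun a => ?_)
  by_cases ha : a ∈ Prod.fst '' U
  · rw [indicator_of_mem ha,
      setIntegral_slice_eq_integral_indicator (measurable_prodMk_left hU)]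
  · rw [indicator_of_notMem ha]
    refine integral_eq_zero_of_ae (Eventually.of_forall fun x => ?_)
    exact indicator_of_notMem (fun hx => ha ⟨(a, x), hx, rfl⟩) f

end SliceIntegrals

lemma notMem_closure_of_notMem_closure_slice {E E' : Type*} [NormedAddCommGroup E]
    [NormedSpace ℝ E] [NormedAddCommGroup E'] [NormedSpace ℝ E'] {U : Set (E × E')}
    (hUo : IsOpen U) (hUc : Convex ℝ U) {a : E} (ha : a ∈ Prod.fst '' U) {x : E'}
    (hx : x ∉ closure (Prod.mk a ⁻¹' U)) : (a, x) ∉ closure U := by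
  obtain ⟨⟨a, x₁⟩, hx₁, rfl⟩ := ha
  contrapose! hx
  have segment_subset : openSegment ℝ x₁ x ⊆ Prod.mk a ⁻¹' U := by
    rw [← image_subset_iff, Prod.image_mk_openSegment_right]
    refine (hUc.openSegment_interior_closure_subset_interior ?_ hx).trans interior_subset
    rwa [hUo.interior_eq]
  exact closure_mono segment_subset
    (segment_subset_closure_openSegment (right_mem_segment ℝ x₁ x))

namespace IsConvexDensity

variable {E E' : Type*} [NormedAddCommGroup E] [NormedSpace ℝ E]
  [NormedAddCommGroup E'] [NormedSpace ℝ E'] {f : E × E' → ℝ} {U : Set (E × E')}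

lemma slice (hf : IsConvexDensity f U) {a : E} (ha : a ∈ Prod.fst '' U) :
    IsConvexDensity (fun x => f (a, x)) (Prod.mk a ⁻¹' U) where
  isOpen := hf.isOpen.preimage (Continuous.prodMk_right a)
  convex x hx y hy s t hs ht hst := by
    have := hf.convex hx hy hs ht hst
    rwa [Prod.smul_mk, Prod.smul_mk, Prod.mk_add_mk, ← add_smul, hst, one_smul] at this
  isBounded := hf.isBounded.image_snd.subset fun x hx => ⟨(a, x), hx, rfl⟩
  nonempty := by
    obtain ⟨⟨_, x⟩, hx, rfl⟩ := ha
    exact ⟨x, hx⟩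
  continuousOn := hf.continuousOn.comp (Continuous.prodMk_right a).continuousOn fun _ hx => hx
  pos x hx := hf.pos (a, x) hx
  bddAbove := hf.bddAbove.mono (forall_mem_image.2 fun _ hx => mem_image_of_mem f hx)

lemma continuousAt_indicator (hf : IsConvexDensity f U) {a : E} (ha : a ∈ Prod.fst '' U)
    {x : E'} (hx : x ∉ frontier (Prod.mk a ⁻¹' U)) : ContinuousAt (U.indicator f) (a, x) := by
  by_cases hxU : (a, x) ∈ U
  · refine (hf.continuousOn.continuousAt (hf.isOpen.mem_nhds hxU)).congr ?_
    filter_upwards [hf.isOpen.mem_nhds hxU] with z hz using (indicator_of_mem hz f).symm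
  · have hx' : x ∉ closure (Prod.mk a ⁻¹' U) := fun h =>
      hx ((hf.slice ha).isOpen.frontier_eq ▸ mem_sdiff_of_mem h hxU)
    have hU := notMem_closure_of_notMem_closure_slice hf.isOpen hf.convex ha hx'
    refine (continuousAt_const (y := (0 : ℝ))).congr ?_
    filter_upwards [isClosed_closure.isOpen_compl.mem_nhds hU] with z hz
    exact (indicator_of_notMem (fun h => hz (subset_closure h)) f).symm

variable [FiniteDimensional ℝ E'] [MeasurableSpace E'] [BorelSpace E'] {μ : Measure E'}
  [μ.IsAddHaarMeasure]

lemma continuousOn_marginal (hf : IsConvexDensity f U) :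
    ContinuousOn (fun a => ∫ x, U.indicator f (a, x) ∂μ) (Prod.fst '' U) := by
  obtain ⟨M, hM₀, hM⟩ := hf.exists_bound
  intro a₀ ha₀
  have fst_open : IsOpen (Prod.fst '' U) := isOpenMap_fst U hf.isOpen
  refine (continuousAt_of_dominated (bound := (Prod.snd '' U).indicator fun _ => M)
    ?_ (Eventually.of_forall fun a => Eventually.of_forall fun x => ?_) ?_ ?_).continuousWithinAt
  · filter_upwards [fst_open.mem_nhds ha₀] with a ha
    exact ((hf.slice ha).integrableOn.integrable_indicator
      (hf.slice ha).isOpen.measurableSet).aestronglyMeasurable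
  · rw [norm_indicator_eq_indicator_norm]
    by_cases hx : (a, x) ∈ U
    · rw [indicator_of_mem hx, indicator_of_mem (mem_image_of_mem Prod.snd hx)]
      exact hM _ hx
    · rw [indicator_of_notMem hx]
      exact indicator_nonneg (fun _ _ => hM₀) _
  · exact (integrableOn_const hf.isBounded.image_snd.measure_lt_top.ne).integrable_indicator
      (isOpenMap_snd U hf.isOpen).measurableSet
  · filter_upwards [compl_mem_ae_iff.2 ((hf.slice ha₀).convex.addHaar_frontier μ)] with x hx
    exact (hf.continuousAt_indicator ha₀ hx).comp (f := fun a => (a, x)) (by fun_prop)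

lemma marginal (hf : IsConvexDensity f U) :
    IsConvexDensity (fun a => ∫ x in Prod.mk a ⁻¹' U, f (a, x) ∂μ) (Prod.fst '' U) where
  isOpen := isOpenMap_fst U hf.isOpen
  convex := hf.convex.linear_image (LinearMap.fst ℝ E E')
  isBounded := hf.isBounded.image_fst
  nonempty := hf.nonempty.image _
  continuousOn := by
    refine (hf.continuousOn_marginal (μ := μ)).congr fun a ha => ?_
    exact setIntegral_slice_eq_integral_indicator (hf.slice ha).isOpen.measurableSet f
  pos a ha := (hf.slice ha).setIntegral_pos
  bddAbove := by
    obtain ⟨M, hM₀, hM⟩ := hf.exists_bound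
    refine ⟨M * μ.real (Prod.snd '' U), forall_mem_image.2 fun a ha => ?_⟩
    have slice_subset : Prod.mk a ⁻¹' U ⊆ Prod.snd '' U := fun x hx => ⟨(a, x), hx, rfl⟩
    have snd_finite : μ (Prod.snd '' U) ≠ ∞ := hf.isBounded.image_snd.measure_lt_top.ne
    calc ∫ x in Prod.mk a ⁻¹' U, f (a, x) ∂μ
        ≤ ‖∫ x in Prod.mk a ⁻¹' U, f (a, x) ∂μ‖ := le_norm_self _
      _ ≤ M * μ.real (Prod.mk a ⁻¹' U) :=
          norm_setIntegral_le_of_norm_le_const (hf.slice ha).isBounded.measure_lt_top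
            fun x hx => hM (a, x) hx
      _ ≤ M * μ.real (Prod.snd '' U) := by gcongr

end IsConvexDensity

/-! ### Monotone transport on the line -/

/-- The distribution function of the density `f` on `I`. -/
noncomputable def cumulative (f : ℝ → ℝ) (I : Set ℝ) (x : ℝ) : ℝ :=
  ∫ t in Iic x, I.indicator f t

/-- The inverse on `I` of the distribution function of the density `f`. -/
noncomputable def quantile (f : ℝ → ℝ) (I : Set ℝ) : ℝ → ℝ :=
  Function.invFunOn (cumulative f I) I

namespace IsConvexDensity

variable {f : ℝ → ℝ} {I : Set ℝ}

lemma integrable_indicator (hf : IsConvexDensity f I) : Integrable (I.indicator f) :=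
  hf.integrableOn.integrable_indicator hf.isOpen.measurableSet

lemma cumulative_eq_add_intervalIntegral (hf : IsConvexDensity f I) (x y : ℝ) :
    cumulative f I y = cumulative f I x + ∫ t in x..y, I.indicator f t :=
  sub_eq_iff_eq_add'.1 <| intervalIntegral.integral_Iic_sub_Iic
    hf.integrable_indicator.integrableOn hf.integrable_indicator.integrableOn

lemma indicator_nonneg (hf : IsConvexDensity f I) (x : ℝ) : 0 ≤ I.indicator f x :=
  Set.indicator_nonneg (fun y hy => (hf.pos y hy).le) x

lemma cumulative_strictMonoOn (hf : IsConvexDensity f I) : StrictMonoOn (cumulative f I) I := by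
  intro x hx y hy hxy
  rw [hf.cumulative_eq_add_intervalIntegral x y]
  refine lt_add_of_pos_right _ (intervalIntegral.intervalIntegral_pos_of_pos_on
    hf.integrable_indicator.intervalIntegrable (fun t ht => ?_) hxy)
  have htI : t ∈ I := hf.convex.ordConnected.out hx hy (Ioo_subset_Icc_self ht)
  rw [indicator_of_mem htI]
  exact hf.pos t htI

lemma hasDerivAt_cumulative (hf : IsConvexDensity f I) {x : ℝ} (hx : x ∈ I) :
    HasDerivAt (cumulative f I) (f x) x := by
  have indicator_eventuallyEq : f =ᶠ[𝓝 x] I.indicator f := by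
    filter_upwards [hf.isOpen.mem_nhds hx] with y hy using (indicator_of_mem hy f).symm
  have continuousAt_indicator : ContinuousAt (I.indicator f) x :=
    (hf.continuousOn.continuousAt (hf.isOpen.mem_nhds hx)).congr indicator_eventuallyEq
  rw [funext (hf.cumulative_eq_add_intervalIntegral x), ← indicator_of_mem hx f]
  exact (intervalIntegral.integral_hasDerivAt_right
    hf.integrable_indicator.intervalIntegrable
    hf.integrable_indicator.aestronglyMeasurable.stronglyMeasurableAtFilter
    continuousAt_indicator).const_add _

lemma continuous_cumulative (hf : IsConvexDensity f I) : Continuous (cumulative f I) := by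
  rw [funext (hf.cumulative_eq_add_intervalIntegral 0)]
  exact continuous_const.add (intervalIntegral.continuous_primitive
    (fun _ _ => hf.integrable_indicator.intervalIntegrable) 0)

lemma cumulative_nonneg (hf : IsConvexDensity f I) (x : ℝ) : 0 ≤ cumulative f I x :=
  integral_nonneg hf.indicator_nonneg

lemma cumulative_le (hf : IsConvexDensity f I) (x : ℝ) :
    cumulative f I x ≤ ∫ t in I, f t := by
  rw [← integral_indicator hf.isOpen.measurableSet]
  exact setIntegral_le_integral hf.integrable_indicator
    (Eventually.of_forall hf.indicator_nonneg)

lemma cumulative_mem_Ioo (hf : IsConvexDensity f I) {x : ℝ} (hx : x ∈ I) :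
    cumulative f I x ∈ Ioo 0 (∫ t in I, f t) := by
  obtain ⟨l, r, hxlr, hlr⟩ := mem_nhds_iff_exists_Ioo_subset.1 (hf.isOpen.mem_nhds hx)
  obtain ⟨y, hly, hyx⟩ := exists_between hxlr.1
  obtain ⟨z, hxz, hzr⟩ := exists_between hxlr.2
  have hy : y ∈ I := hlr ⟨hly, hyx.trans hxlr.2⟩
  have hz : z ∈ I := hlr ⟨hxlr.1.trans hxz, hzr⟩
  exact ⟨(hf.cumulative_nonneg y).trans_lt (hf.cumulative_strictMonoOn hy hx hyx),
    (hf.cumulative_strictMonoOn hx hz hxz).trans_le (hf.cumulative_le z)⟩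

lemma mem_of_cumulative_mem_Ioo (hf : IsConvexDensity f I) {x : ℝ}
    (hx : cumulative f I x ∈ Ioo 0 (∫ t in I, f t)) : x ∈ I := by
  obtain ⟨a, ha, hax⟩ : ∃ a ∈ I, a ≤ x := by
    by_contra! h
    refine hx.1.ne' (setIntegral_eq_zero_of_forall_eq_zero fun t ht => ?_)
    exact indicator_of_notMem (fun htI => (h t htI).not_ge ht) f
  obtain ⟨b, hb, hxb⟩ : ∃ b ∈ I, x ≤ b := by
    by_contra! h
    refine hx.2.ne ?_
    rw [← integral_indicator hf.isOpen.measurableSet]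
    refine setIntegral_eq_integral_of_forall_compl_eq_zero fun t ht => ?_
    exact indicator_of_notMem (fun htI => ht (h t htI).le) f
  exact hf.convex.ordConnected.out ha hb ⟨hax, hxb⟩

lemma tendsto_cumulative_atTop (hf : IsConvexDensity f I) :
    Tendsto (cumulative f I) atTop (𝓝 (∫ t in I, f t)) := by
  rw [← integral_indicator hf.isOpen.measurableSet]
  exact (aecover_Iic tendsto_id).integral_tendsto_of_countably_generated hf.integrable_indicator

lemma bijOn_cumulative (hf : IsConvexDensity f I) :
    BijOn (cumulative f I) I (Ioo 0 (∫ t in I, f t)) := by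
  refine ⟨fun x hx => hf.cumulative_mem_Ioo hx, hf.cumulative_strictMonoOn.injOn, fun v hv => ?_⟩
  obtain ⟨x, rfl⟩ : v ∈ range (cumulative f I) := by
    rw [← image_univ]
    exact isPreconnected_univ.intermediate_value_Ioo (l₁ := atBot) (l₂ := atTop) (by simp)
      (by simp) hf.continuous_cumulative.continuousOn (tendsto_integral_Iic_zero tendsto_id)
      hf.tendsto_cumulative_atTop hv
  exact mem_image_of_mem _ (hf.mem_of_cumulative_mem_Ioo hv)

lemma quantile_mem (hf : IsConvexDensity f I) {v : ℝ} (hv : v ∈ Ioo 0 (∫ t in I, f t)) :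
    quantile f I v ∈ I :=
  Function.invFunOn_mem (hf.bijOn_cumulative.surjOn hv)

lemma cumulative_quantile (hf : IsConvexDensity f I) {v : ℝ} (hv : v ∈ Ioo 0 (∫ t in I, f t)) :
    cumulative f I (quantile f I v) = v :=
  Function.invFunOn_eq (hf.bijOn_cumulative.surjOn hv)

lemma quantile_strictMonoOn (hf : IsConvexDensity f I) :
    StrictMonoOn (quantile f I) (Ioo 0 (∫ t in I, f t)) := by
  intro v hv w hw hvw
  rwa [← hf.cumulative_strictMonoOn.lt_iff_lt (hf.quantile_mem hv) (hf.quantile_mem hw),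
    hf.cumulative_quantile hv, hf.cumulative_quantile hw]

lemma surjOn_quantile (hf : IsConvexDensity f I) :
    SurjOn (quantile f I) (Ioo 0 (∫ t in I, f t)) I := fun _ hx =>
  ⟨_, hf.cumulative_mem_Ioo hx, hf.cumulative_strictMonoOn.injOn.leftInvOn_invFunOn hx⟩

lemma hasDerivAt_quantile (hf : IsConvexDensity f I) {v : ℝ}
    (hv : v ∈ Ioo 0 (∫ t in I, f t)) :
    HasDerivAt (quantile f I) (f (quantile f I v))⁻¹ v := by
  have hmem := hf.quantile_mem hv
  have continuousAt_quantile : ContinuousAt (quantile f I) v :=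
    hf.quantile_strictMonoOn.continuousAt_of_image_mem_nhds (isOpen_Ioo.mem_nhds hv)
      (mem_of_superset (hf.isOpen.mem_nhds hmem) hf.surjOn_quantile)
  refine (hf.hasDerivAt_cumulative hmem).of_local_left_inverse continuousAt_quantile
    (hf.pos _ hmem).ne' ?_
  filter_upwards [isOpen_Ioo.mem_nhds hv] with w hw using hf.cumulative_quantile hw

lemma exists_monotone_transport {g : ℝ → ℝ} {J : Set ℝ} (hf : IsConvexDensity f I)
    (hg : IsConvexDensity g J) :
    ∃ T : ℝ → ℝ, MapsTo T I J ∧ StrictMonoOn T I ∧ ∀ x ∈ I,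
      HasDerivAt T (f x * (∫ y in J, g y) / (g (T x) * ∫ y in I, f y)) x := by
  have hA := hf.setIntegral_pos (μ := volume)
  have hB := hg.setIntegral_pos (μ := volume)
  set r := (∫ y in J, g y) / ∫ y in I, f y with hr
  have hr₀ : 0 < r := div_pos hB hA
  have level_mem : ∀ x ∈ I, r * cumulative f I x ∈ Ioo 0 (∫ y in J, g y) := fun x hx => by
    obtain ⟨hpos, hlt⟩ := hf.cumulative_mem_Ioo hx
    refine ⟨mul_pos hr₀ hpos, ?_⟩
    calc r * cumulative f I x < r * ∫ y in I, f y := by gcongr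
      _ = ∫ y in J, g y := div_mul_cancel₀ _ hA.ne'
  refine ⟨fun x => quantile g J (r * cumulative f I x),
    fun x hx => hg.quantile_mem (level_mem x hx),
    fun x hx y hy hxy => hg.quantile_strictMonoOn (level_mem x hx) (level_mem y hy) ?_,
    fun x hx => ?_⟩
  · have := hf.cumulative_strictMonoOn hx hy hxy
    gcongr
  · refine ((hg.hasDerivAt_quantile (level_mem x hx)).comp x
      ((hf.hasDerivAt_cumulative hx).const_mul r)).congr_deriv ?_
    have := hg.pos _ (hg.quantile_mem (level_mem x hx))
    rw [hr]
    field_simp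

lemma setLIntegral_le_lintegral_of_transport {g : ℝ → ℝ} {J : Set ℝ} {Φ H : ℝ → ℝ≥0∞} {t : ℝ}
    (hf : IsConvexDensity f I) (hg : IsConvexDensity g J) (ht : t ∈ Icc (0 : ℝ) 1)
    (hΦ : ∀ a ∈ I, ∀ b ∈ J, ∀ l : ℝ, 0 < l →
      l * (g b * ∫ y in I, f y) = f a * ∫ y in J, g y →
      Φ a ≤ ENNReal.ofReal (1 - t + t * l) * H ((1 - t) * a + t * b)) :
    ∫⁻ a in I, Φ a ≤ ∫⁻ a, H a := by
  obtain ⟨T, hTmaps, hTmono, hTderiv⟩ := hf.exists_monotone_transport hg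
  have hA := hf.setIntegral_pos (μ := volume)
  have hB := hg.setIntegral_pos (μ := volume)
  set l : ℝ → ℝ := fun x => f x * (∫ y in J, g y) / (g (T x) * ∫ y in I, f y)
  have l_pos : ∀ x ∈ I, 0 < l x := fun x hx =>
    div_pos (mul_pos (hf.pos x hx) hB) (mul_pos (hg.pos _ (hTmaps hx)) hA)
  have hSderiv : ∀ x ∈ I,
      HasDerivWithinAt (fun x => (1 - t) * x + t * T x) (1 - t + t * l x) I x := fun x hx =>
    ((((hasDerivAt_id x).const_mul (1 - t)).add
      ((hTderiv x hx).const_mul t)).congr_deriv (by rw [mul_one])).hasDerivWithinAt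
  have hSinj : InjOn (fun x => (1 - t) * x + t * T x) I := by
    refine StrictMonoOn.injOn fun x hx y hy hxy => ?_
    have increment_pos := convex_Ioi (0 : ℝ) (sub_pos.2 hxy) (sub_pos.2 (hTmono hx hy hxy))
      (sub_nonneg.2 ht.2) ht.1 (sub_add_cancel 1 t)
    simp only [smul_eq_mul, mem_Ioi] at increment_pos
    linarith
  calc ∫⁻ a in I, Φ a
      ≤ ∫⁻ a in I, ENNReal.ofReal |1 - t + t * l a| * H ((1 - t) * a + t * T a) := by
        refine setLIntegral_mono' hf.isOpen.measurableSet fun a ha => ?_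
        have hl := l_pos a ha
        have hgT := hg.pos _ (hTmaps ha)
        rw [abs_of_nonneg (add_nonneg (sub_nonneg.2 ht.2) (mul_nonneg ht.1 hl.le))]
        exact hΦ a ha (T a) (hTmaps ha) (l a) hl
          (div_mul_cancel₀ _ (mul_pos hgT hA).ne')
    _ = ∫⁻ a in (fun x => (1 - t) * x + t * T x) '' I, H a :=
        (lintegral_image_eq_lintegral_abs_deriv_mul hf.isOpen.measurableSet hSderiv hSinj H).symm
    _ ≤ ∫⁻ a, H a := setLIntegral_le_lintegral _ _

end IsConvexDensity

/-! ### Knothe transport -/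

/-- The integral inequality obtained from a triangular (Knothe) map transporting one convex density
to another in dimension `n`. In suitable coordinates the Jacobian of this map at `x` is triangular
with positive diagonal entries `l i`, and the transport equation relates `∏ i, l i` to the two
densities at `x` and at its image `y`; the interpolation `x ↦ (1 - t) x + t y` then has Jacobian
determinant `∏ i, (1 - t + t * l i)`. -/
def KnotheTransportBound {E : Type*} [NormedAddCommGroup E] [NormedSpace ℝ E] [MeasurableSpace E]
    (n : ℕ) (μ : Measure E) : Prop :=
  ∀ ⦃f g : E → ℝ⦄ ⦃U W : Set E⦄ ⦃Φ h : E → ℝ≥0∞⦄ ⦃t : ℝ⦄,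
    IsConvexDensity f U → IsConvexDensity g W → Measurable Φ → Measurable h → t ∈ Icc (0 : ℝ) 1 →
    (∀ x ∈ U, ∀ y ∈ W, ∀ l : Fin n → ℝ, (∀ i, 0 < l i) →
      (∏ i, l i) * (g y * ∫ z in U, f z ∂μ) = f x * ∫ z in W, g z ∂μ →
      Φ x ≤ ENNReal.ofReal (∏ i, (1 - t + t * l i)) * h ((1 - t) • x + t • y)) →
    ∫⁻ x in U, Φ x ∂μ ≤ ∫⁻ x, h x ∂μ

namespace KnotheTransportBound

variable {E E' : Type*} [NormedAddCommGroup E] [NormedSpace ℝ E] [MeasurableSpace E]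
  [NormedAddCommGroup E'] [NormedSpace ℝ E'] [MeasurableSpace E'] {n : ℕ}

lemma zero_of_subsingleton [Subsingleton E] (μ : Measure E) : KnotheTransportBound 0 μ := by
  intro f g U W Φ h t hf hg _ _ _ hΦ
  have eq_univ {A : Set E} (hA : A.Nonempty) : A = univ := Subsingleton.eq_univ_of_nonempty hA
  have f_const (x : E) : f = fun _ => f x := funext fun y => by rw [Subsingleton.elim y x]
  have g_const (x : E) : g = fun _ => g x := funext fun y => by rw [Subsingleton.elim y x]
  rw [eq_univ hf.nonempty, eq_univ hg.nonempty] at hΦ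
  rw [eq_univ hf.nonempty, Measure.restrict_univ]
  refine lintegral_mono fun x => ?_
  have hx := hΦ x (mem_univ x) x (mem_univ x) Fin.elim0 (fun i => i.elim0) ?_
  · simpa [Subsingleton.elim ((1 - t) • x + t • x) x] using hx
  · rw [f_const x, g_const x]
    simp only [integral_const, smul_eq_mul, Finset.univ_eq_empty, Finset.prod_empty]
    ring

lemma const_smul {μ : Measure E} (hμ : KnotheTransportBound n μ) (c : ℝ≥0∞) :
    KnotheTransportBound n (c • μ) := by
  intro f g U W Φ h t hf hg hΦm hhm ht hΦ
  rw [Measure.restrict_smul, lintegral_smul_measure, lintegral_smul_measure]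
  refine mul_le_mul_right (hμ hf hg hΦm hhm ht fun x hx y hy l hl hlfg => ?_) c
  refine hΦ x hx y hy l hl ?_
  simp only [Measure.restrict_smul, integral_smul_measure, smul_eq_mul]
  linear_combination c.toReal * hlfg

lemma map [BorelSpace E] [BorelSpace E'] {μ : Measure E'} (hμ : KnotheTransportBound n μ)
    (e : E' ≃L[ℝ] E) : KnotheTransportBound n (μ.map e) := by
  intro f g U W Φ h t hf hg hΦm hhm ht hΦ
  have he : MeasurableEmbedding e := e.toHomeomorph.measurableEmbedding
  simp only [he.setIntegral_map] at hΦ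
  rw [setLIntegral_map hf.isOpen.measurableSet hΦm he.measurable,
    lintegral_map hhm he.measurable]
  refine hμ (hf.comp_continuousLinearEquiv e) (hg.comp_continuousLinearEquiv e)
    (hΦm.comp he.measurable) (hhm.comp he.measurable) ht fun x hx y hy l hl hlfg => ?_
  rw [map_add, map_smul, map_smul]
  exact hΦ (e x) hx (e y) hy l hl hlfg

lemma of_finrank_eq [FiniteDimensional ℝ E] [BorelSpace E] [FiniteDimensional ℝ E'] [BorelSpace E']
    {μ' : Measure E'} [μ'.IsAddHaarMeasure] (hμ' : KnotheTransportBound n μ')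
    (hfinrank : finrank ℝ E' = finrank ℝ E) (μ : Measure E) [μ.IsAddHaarMeasure] :
    KnotheTransportBound n μ := by
  let e : E' ≃L[ℝ] E := ContinuousLinearEquiv.ofFinrankEq hfinrank
  rw [Measure.isAddLeftInvariant_eq_smul μ (μ'.map e)]
  exact (hμ'.map e).const_smul _

lemma prod [FiniteDimensional ℝ E] [BorelSpace E] {ν : Measure E} [ν.IsAddHaarMeasure]
    (hν : KnotheTransportBound n ν) :
    KnotheTransportBound (n + 1) ((volume : Measure ℝ).prod ν) := by
  intro f g U W Φ h t hf hg hΦm hhm ht hΦ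
  have mU := hf.isOpen.measurableSet
  have mW := hg.isOpen.measurableSet
  have mU₁ := (isOpenMap_fst U hf.isOpen).measurableSet
  have mW₁ := (isOpenMap_fst W hg.isOpen).measurableSet
  rw [setIntegral_prod_eq_integral_slice mU mU₁ hf.integrableOn,
    setIntegral_prod_eq_integral_slice mW mW₁ hg.integrableOn] at hΦ
  rw [setLIntegral_prod_eq_lintegral_slice mU mU₁ hΦm, lintegral_prod _ hhm.aemeasurable]
  refine (hf.marginal (μ := ν)).setLIntegral_le_lintegral_of_transport
    (hg.marginal (μ := ν)) ht fun a ha b hb l₀ hl₀ hl₀fg => ?_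
  rw [← lintegral_const_mul _ (by fun_prop)]
  refine hν (hf.slice ha) (hg.slice hb) (by fun_prop) (by fun_prop) ht fun x hx y hy l hl hlfg => ?_
  have factor_nonneg : 0 ≤ 1 - t + t * l₀ :=
    add_nonneg (sub_nonneg.2 ht.2) (mul_nonneg ht.1 hl₀.le)
  have hxy := hΦ (a, x) hx (b, y) hy (Fin.cons l₀ l) (Fin.cases hl₀ hl) ?_
  · simp only [Fin.prod_univ_succ, Fin.cons_zero, Fin.cons_succ,
      ENNReal.ofReal_mul factor_nonneg] at hxy
    exact hxy.trans_eq (by rw [mul_comm (ENNReal.ofReal (1 - t + t * l₀)), mul_assoc]; rfl)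
  · rw [Fin.prod_univ_succ, Fin.cons_zero]
    simp only [Fin.cons_succ]
    have hFa : 0 < ∫ x in Prod.mk a ⁻¹' U, f (a, x) ∂ν := (hf.slice ha).setIntegral_pos
    refine mul_left_cancel₀ hFa.ne' ?_
    linear_combination (l₀ * ∫ a in Prod.fst '' U, ∫ x in Prod.mk a ⁻¹' U, f (a, x) ∂ν) * hlfg +
      f (a, x) * hl₀fg

lemma volume_fin_fun (n : ℕ) : KnotheTransportBound n (volume : Measure (Fin n → ℝ)) := by
  induction n with
  | zero => exact zero_of_subsingleton volume
  | succ n ih =>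
    refine (prod ih).of_finrank_eq ?_ volume
    rw [finrank_prod, finrank_self, finrank_fin_fun, finrank_fin_fun, add_comm]

theorem addHaar [FiniteDimensional ℝ E] [BorelSpace E] (μ : Measure E) [μ.IsAddHaarMeasure] :
    KnotheTransportBound (finrank ℝ E) μ :=
  (volume_fin_fun (finrank ℝ E)).of_finrank_eq (finrank_fin_fun ℝ) μ

end KnotheTransportBound

/-! ### Second-order bounds -/

section SecondOrderBounds

lemma isLocalMin_of_hasDerivAt_hasDerivAt_pos {f f' : ℝ → ℝ} {a d : ℝ} (hd : 0 < d)
    (hf : ∀ᶠ x in 𝓝 a, HasDerivAt f (f' x) x) (hf' : HasDerivAt f' d a) (ha : f' a = 0) :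
    IsLocalMin f a := by
  have deriv_eq : deriv f =ᶠ[𝓝 a] f' := hf.mono fun x hx => hx.deriv
  refine isLocalMin_of_deriv_deriv_pos ?_ ?_ hf.self_of_nhds.continuousAt
  · rwa [deriv_eq.deriv_eq, hf'.deriv]
  · rw [deriv_eq.self_of_nhds, ha]

lemma eventually_mem_Ioo_neg_one_one : ∀ᶠ σ : ℝ in 𝓝 0, σ ∈ Ioo (-1) 1 :=
  Ioo_mem_nhds (by norm_num) (by norm_num)

lemma tendsto_two_mul_nhds_zero : Tendsto (fun s : ℝ => 2 * s) (𝓝 0) (𝓝 0) := by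
  simpa using (continuous_const_mul (2 : ℝ)).tendsto 0

lemma eventually_add_mul_log_add_sub_mul_log_le {κ : ℝ} (hκ : 1 < κ) : ∀ᶠ σ : ℝ in 𝓝 0,
    (1 + σ) * log (1 + σ) + (1 - σ) * log (1 - σ) ≤ κ * σ ^ 2 := by
  have hasDerivAt_add (σ : ℝ) : HasDerivAt (fun σ : ℝ => 1 + σ) 1 σ :=
    (hasDerivAt_id σ).const_add 1
  have hasDerivAt_sub (σ : ℝ) : HasDerivAt (fun σ : ℝ => 1 - σ) (-1) σ :=
    (hasDerivAt_id σ).const_sub 1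
  have local_min := isLocalMin_of_hasDerivAt_hasDerivAt_pos
    (f := fun σ => κ * σ ^ 2 - ((1 + σ) * log (1 + σ) + (1 - σ) * log (1 - σ)))
    (f' := fun σ => κ * (2 * σ) - (log (1 + σ) - log (1 - σ))) (a := 0)
    (d := 2 * (κ - 1)) (by linarith) ?_ ?_ (by simp)
  · filter_upwards [local_min] with σ hσ
    norm_num at hσ
    linarith
  · filter_upwards [eventually_mem_Ioo_neg_one_one] with σ hσ
    have h₁ : 1 + σ ≠ 0 := by linarith [hσ.1]
    have h₂ : 1 - σ ≠ 0 := by linarith [hσ.2]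
    refine (((hasDerivAt_pow 2 σ).const_mul κ).sub
      (((hasDerivAt_add σ).mul ((hasDerivAt_add σ).log h₁)).add
        ((hasDerivAt_sub σ).mul ((hasDerivAt_sub σ).log h₂)))).congr_deriv ?_
    field_simp
    push_cast
    ring
  · refine ((((hasDerivAt_id (0 : ℝ)).const_mul 2).const_mul κ).sub
      (((hasDerivAt_add 0).log (by norm_num)).sub
        ((hasDerivAt_sub 0).log (by norm_num)))).congr_deriv ?_
    norm_num
    ring

-- Weighted AM-GM with the weights `1/2 ∓ s` applied to `1 / (1 - 2s)` and `l / (1 + 2s)`.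
lemma eventually_exp_neg_mul_rpow_le {C : ℝ} (hC : 2 < C) : ∀ᶠ s : ℝ in 𝓝 0, ∀ l : ℝ, 0 < l →
    exp (-(C * s ^ 2)) * l ^ (1 / 2 + s) ≤ (1 + l) / 2 := by
  filter_upwards [
    tendsto_two_mul_nhds_zero.eventually
      (eventually_add_mul_log_add_sub_mul_log_le (κ := C / 2) (by linarith)),
    tendsto_two_mul_nhds_zero.eventually eventually_mem_Ioo_neg_one_one] with s hs hs₁ l hl
  have h₁ : 0 < 1 + 2 * s := by linarith [hs₁.1]
  have h₂ : 0 < 1 - 2 * s := by linarith [hs₁.2]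
  have rpow_sub : (1 - 2 * s) ^ (1 / 2 - s) = exp ((1 - 2 * s) * log (1 - 2 * s) / 2) := by
    rw [Real.rpow_def_of_pos h₂]; congr 1; ring
  have rpow_add : (1 + 2 * s) ^ (1 / 2 + s) = exp ((1 + 2 * s) * log (1 + 2 * s) / 2) := by
    rw [Real.rpow_def_of_pos h₁]; congr 1; ring
  calc exp (-(C * s ^ 2)) * l ^ (1 / 2 + s)
      ≤ exp (-((1 - 2 * s) * log (1 - 2 * s) / 2 + (1 + 2 * s) * log (1 + 2 * s) / 2)) *
          l ^ (1 / 2 + s) := by gcongr; linarith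
    _ = (1 / (1 - 2 * s)) ^ (1 / 2 - s) * (l / (1 + 2 * s)) ^ (1 / 2 + s) := by
        rw [Real.div_rpow hl.le h₁.le, Real.div_rpow zero_le_one h₂.le, Real.one_rpow,
          rpow_sub, rpow_add, Real.exp_neg, Real.exp_add]
        field_simp
    _ ≤ (1 / 2 - s) * (1 / (1 - 2 * s)) + (1 / 2 + s) * (l / (1 + 2 * s)) :=
        Real.geom_mean_le_arith_mean2_weighted (by linarith) (by linarith) (by positivity)
          (by positivity) (by ring)
    _ = (1 + l) / 2 := by field_simp

lemma eventually_one_add_rpow_lt_two (r : ℝ) : ∀ᶠ σ : ℝ in 𝓝 0, (1 + σ) ^ r < 2 := by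
  have hcont : ContinuousAt (fun σ : ℝ => (1 + σ) ^ r) 0 :=
    ContinuousAt.rpow_const (by fun_prop) (by norm_num)
  exact hcont.eventually (gt_mem_nhds (by norm_num))

lemma hasDerivAt_two_sub_one_add_rpow (r : ℝ) {σ : ℝ} (hσ : 0 < 1 + σ) :
    HasDerivAt (fun σ : ℝ => 2 - (1 + σ) ^ (-r)) (r * (1 + σ) ^ (-r - 1)) σ := by
  refine ((((hasDerivAt_id σ).const_add 1).rpow_const (p := -r)
    (Or.inl hσ.ne')).const_sub 2).congr_deriv ?_
  simp only [id]
  ring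

lemma eventually_two_sub_rpow_rpow_le {q κ : ℝ} (hq : 0 < q) (hκ : 1 < κ) :
    ∀ᶠ σ : ℝ in 𝓝 0, (2 - (1 + σ) ^ (-q⁻¹)) ^ (-q) ≤ 1 - σ + κ * (1 + q⁻¹) * σ ^ 2 := by
  have q_mul_inv : q * q⁻¹ = 1 := mul_inv_cancel₀ hq.ne'
  have local_min := isLocalMin_of_hasDerivAt_hasDerivAt_pos
    (f := fun σ => 1 - σ + κ * (1 + q⁻¹) * σ ^ 2 - (2 - (1 + σ) ^ (-q⁻¹)) ^ (-q))
    (f' := fun σ => -1 + κ * (1 + q⁻¹) * (2 * σ) +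
      (2 - (1 + σ) ^ (-q⁻¹)) ^ (-q - 1) * (1 + σ) ^ (-q⁻¹ - 1)) (a := 0)
    (d := 2 * (κ - 1) * (1 + q⁻¹)) (mul_pos (by linarith) (by positivity)) ?_ ?_ (by norm_num)
  · filter_upwards [local_min] with σ hσ
    norm_num at hσ
    linarith
  · filter_upwards [eventually_one_add_rpow_lt_two (-q⁻¹), eventually_mem_Ioo_neg_one_one]
      with σ hσ₁ hσ₂
    refine ((((hasDerivAt_id σ).const_sub 1).add
      ((hasDerivAt_pow 2 σ).const_mul (κ * (1 + q⁻¹)))).sub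
        ((hasDerivAt_two_sub_one_add_rpow q⁻¹ (by linarith [hσ₂.1])).rpow_const
          (p := -q) (Or.inl (by linarith)))).congr_deriv ?_
    push_cast
    linear_combination
      ((2 - (1 + σ) ^ (-q⁻¹)) ^ (-q - 1) * (1 + σ) ^ (-q⁻¹ - 1)) * q_mul_inv
  · refine ((((hasDerivAt_id (0 : ℝ)).const_mul 2).const_mul (κ * (1 + q⁻¹))).const_add (-1)
      |>.add (((hasDerivAt_two_sub_one_add_rpow q⁻¹ (by norm_num)).rpow_const
        (p := -q - 1) (Or.inl (by norm_num))).mul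
          (((hasDerivAt_id (0 : ℝ)).const_add 1).rpow_const
            (p := -q⁻¹ - 1) (Or.inl (by norm_num))))).congr_deriv ?_
    norm_num
    linear_combination -q_mul_inv

end SecondOrderBounds

/-! ### Convex homogeneous functions -/

/-- `V` is convex and homogeneous of degree `p > 1`. -/
structure IsConvexHomogeneous {E : Type*} [AddCommGroup E] [Module ℝ E] (p : ℝ) (V : E → ℝ) :
    Prop where
  one_lt : 1 < p
  convexOn : ConvexOn ℝ univ V
  map_smul : ∀ (x : E) (c : ℝ), 0 < c → V (c • x) = c ^ p * V x

namespace IsConvexHomogeneous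

section Module

variable {E : Type*} [AddCommGroup E] [Module ℝ E] {p : ℝ} {V : E → ℝ}

lemma map_zero (hV : IsConvexHomogeneous p V) : V 0 = 0 := by
  have h := hV.map_smul 0 2 two_pos
  rw [smul_zero] at h
  have : (1 : ℝ) < 2 ^ p := Real.one_lt_rpow one_lt_two (by linarith [hV.one_lt])
  nlinarith

lemma nonneg (hV : IsConvexHomogeneous p V) (x : E) : 0 ≤ V x := by
  have convex_half := hV.convexOn.2 (mem_univ x) (mem_univ 0)
    (by norm_num : (0 : ℝ) ≤ 1 / 2) (by norm_num : (0 : ℝ) ≤ 1 / 2) (by norm_num)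
  rw [smul_zero, add_zero, hV.map_smul x _ (by norm_num), hV.map_zero, smul_zero, add_zero,
    smul_eq_mul] at convex_half
  have : (1 / 2 : ℝ) ^ p < (1 / 2) ^ (1 : ℝ) :=
    Real.rpow_lt_rpow_of_exponent_gt (by norm_num) (by norm_num) hV.one_lt
  rw [Real.rpow_one] at this
  nlinarith

lemma map_midpoint_le (hV : IsConvexHomogeneous p V) {u : ℝ} (hu : u ∈ Ioo (0 : ℝ) 1) (x y : E) :
    V ((1 / 2 : ℝ) • (x + y)) ≤
      1 / 2 * (2 * (1 - u)) ^ (-(p - 1)) * V x + 1 / 2 * (2 * u) ^ (-(p - 1)) * V y := by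
  have scaled (z : E) {v : ℝ} (hv : 0 < v) :
      v * V ((2 * v)⁻¹ • z) = 1 / 2 * (2 * v) ^ (-(p - 1)) * V z := by
    rw [hV.map_smul z _ (by positivity), Real.inv_rpow (by positivity),
      ← Real.rpow_neg (by positivity), neg_sub, sub_eq_add_neg, Real.rpow_add (by positivity),
      Real.rpow_one]
    ring
  have hu' : 0 < 1 - u := sub_pos.2 hu.2
  have midpoint_eq : (1 / 2 : ℝ) • (x + y) =
      (1 - u) • (2 * (1 - u))⁻¹ • x + u • (2 * u)⁻¹ • y := by
    have half (v : ℝ) (hv : v ≠ 0) : v * (2 * v)⁻¹ = 1 / 2 := by field_simp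
    rw [smul_smul, smul_smul, half _ hu'.ne', half _ hu.1.ne', smul_add]
  rw [midpoint_eq, ← scaled x hu', ← scaled y hu.1]
  exact hV.convexOn.2 (mem_univ _) (mem_univ _) hu'.le hu.1.le (sub_add_cancel 1 u)

lemma eventually_map_midpoint_le (hV : IsConvexHomogeneous p V) {C : ℝ} (hC : 2 < C) :
    ∀ᶠ s : ℝ in 𝓝 0, ∀ x y, V ((1 / 2 : ℝ) • (x + y)) ≤
      (1 / 2 - s + C * (p / (p - 1)) * s ^ 2) * V x + (1 / 2 + s) * V y := by
  have hq : 0 < p - 1 := sub_pos.2 hV.one_lt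
  filter_upwards [
    tendsto_two_mul_nhds_zero.eventually
      (eventually_two_sub_rpow_rpow_le hq (κ := C / 2) (by linarith)),
    tendsto_two_mul_nhds_zero.eventually (eventually_one_add_rpow_lt_two (-(p - 1)⁻¹)),
    tendsto_two_mul_nhds_zero.eventually eventually_mem_Ioo_neg_one_one] with s hs hs₁ hs₂ x y
  have h₁ : 0 < 1 + 2 * s := by linarith [hs₂.1]
  -- The splitting parameter for which the coefficient of `V y` is exactly `1 / 2 + s`.
  set u := (1 + 2 * s) ^ (-(p - 1)⁻¹) / 2 with hu
  have hu₀ : 0 < u := by positivity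
  refine (hV.map_midpoint_le ⟨hu₀, by linarith⟩ x y).trans ?_
  have two_mul_u : 2 * u = (1 + 2 * s) ^ (-(p - 1)⁻¹) := by rw [hu]; ring
  have coeff_y : (2 * u) ^ (-(p - 1)) = 1 + 2 * s := by
    rw [two_mul_u, ← Real.rpow_mul h₁.le, neg_mul_neg, inv_mul_cancel₀ hq.ne', Real.rpow_one]
  have coeff_x : (2 * (1 - u)) ^ (-(p - 1)) ≤
      1 - 2 * s + C / 2 * (p / (p - 1)) * (2 * s) ^ 2 := by
    rw [mul_sub, mul_one, two_mul_u]
    refine hs.trans_eq ?_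
    field_simp
    ring
  have := mul_le_mul_of_nonneg_right coeff_x (hV.nonneg x)
  rw [coeff_y]
  linarith

end Module

lemma continuous {E : Type*} [NormedAddCommGroup E] [NormedSpace ℝ E] [FiniteDimensional ℝ E]
    {p : ℝ} {V : E → ℝ} (hV : IsConvexHomogeneous p V) : Continuous V :=
  continuousOn_univ.1 (hV.convexOn.continuousOn isOpen_univ)

end IsConvexHomogeneous

/-! ### The concavity exponent -/

/-- The concavity exponent of the theorem, written as the Laplace transform at `d` of
`s ↦ (1 + s p / (p - 1)) ^ (-d / p)`; this is the form in which the exponent arises. -/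
noncomputable def concavityExponent (d p : ℝ) : ℝ :=
  ∫ s in Ioi (0 : ℝ), exp (-(s * d)) * (1 + s * (p / (p - 1))) ^ (-(d / p))

section ConcavityExponent

variable {d p : ℝ}

lemma concavityExponent_integrand_pos (hp : 1 < p) {s : ℝ} (hs : 0 < s) :
    0 < exp (-(s * d)) * (1 + s * (p / (p - 1))) ^ (-(d / p)) := by
  have : 0 < p - 1 := sub_pos.2 hp
  positivity

lemma integrableOn_concavityExponent_integrand (hd : 0 < d) (hp : 1 < p) :
    IntegrableOn (fun s : ℝ => exp (-(s * d)) * (1 + s * (p / (p - 1))) ^ (-(d / p)))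
      (Ioi 0) := by
  have : 0 < p - 1 := sub_pos.2 hp
  refine Integrable.mono' (integrableOn_exp_mul_Ioi (neg_neg_of_pos hd) 0) (by fun_prop) ?_
  filter_upwards [ae_restrict_mem measurableSet_Ioi] with s (hs : 0 < s)
  rw [Real.norm_of_nonneg (concavityExponent_integrand_pos hp hs).le, neg_mul, mul_comm d s]
  refine mul_le_of_le_one_right (exp_pos _).le
    (Real.rpow_le_one_of_one_le_of_nonpos ?_ (neg_nonpos.2 (by positivity)))
  exact le_add_of_nonneg_right (by positivity)

lemma concavityExponent_pos (hd : 0 < d) (hp : 1 < p) : 0 < concavityExponent d p := by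
  rw [concavityExponent, setIntegral_pos_iff_support_of_nonneg_ae
    ((ae_restrict_mem measurableSet_Ioi).mono fun s hs =>
      (concavityExponent_integrand_pos hp hs).le)
    (integrableOn_concavityExponent_integrand hd hp)]
  refine lt_of_lt_of_le ?_ (measure_mono (s := Ioi 0) fun s hs =>
    ⟨(concavityExponent_integrand_pos hp hs).ne', hs⟩)
  simp

lemma uiGamma_eq_setIntegral_Ioi_zero (s x : ℝ) :
    uiGamma s x = ∫ t in Ioi (0 : ℝ), (t + x) ^ (s - 1) * exp (-(t + x)) := by
  have shift := (measurePreserving_add_right volume x).setIntegral_preimage_emb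
    (MeasurableEquiv.addRight x).measurableEmbedding
    (fun t : ℝ => t ^ (s - 1) * exp (-t)) (Ioi x)
  rw [uiGamma, ← shift]
  congr 2
  ext t
  simp

lemma concavityExponent_eq_uiGamma (hd : 0 < d) (hp : 1 < p) :
    concavityExponent d p = (1 / d) * exp ((p - 1) * d / p) * ((p - 1) * d / p) ^ (d / p) *
      uiGamma (1 - d / p) ((p - 1) * d / p) := by
  have hp₁ : 0 < p - 1 := sub_pos.2 hp
  set a : ℝ := (p - 1) * d / p with ha
  have ha₀ : 0 < a := by positivity
  have rescale := integral_comp_mul_left_Ioi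
    (fun t => (t + a) ^ (1 - d / p - 1) * exp (-(t + a))) 0 hd
  rw [mul_zero, smul_eq_mul, ← uiGamma_eq_setIntegral_Ioi_zero] at rescale
  have integrand_eq : ∀ s ∈ Ioi (0 : ℝ),
      exp (-(s * d)) * (1 + s * (p / (p - 1))) ^ (-(d / p)) =
        exp a * a ^ (d / p) * ((d * s + a) ^ (1 - d / p - 1) * exp (-(d * s + a))) := by
    intro s (hs : 0 < s)
    have factor : d * s + a = a * (1 + s * (p / (p - 1))) := by rw [ha]; field_simp; ring
    have exp_split : exp (-(d * s + a)) = exp (-(s * d)) * (exp a)⁻¹ := by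
      rw [← Real.exp_neg, ← Real.exp_add]; congr 1; ring
    rw [exp_split, factor, Real.mul_rpow ha₀.le (by positivity),
      show 1 - d / p - 1 = -(d / p) by ring, Real.rpow_neg ha₀.le]
    have := Real.rpow_pos_of_pos ha₀ (d / p)
    field_simp
  rw [concavityExponent, setIntegral_congr_fun measurableSet_Ioi integrand_eq, integral_const_mul,
    rescale]
  ring

end ConcavityExponent

lemma ofReal_exp_neg_div_add_mul_eq_lintegral {d c v : ℝ} (hw : 0 < d + c * v) :
    ENNReal.ofReal (exp (-v) / (d + c * v)) =
      ∫⁻ s in Ioi (0 : ℝ), ENNReal.ofReal (exp (-(s * d)) * exp (-((1 + s * c) * v))) := by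
  have integrand_eq (s : ℝ) : exp (-(s * d)) * exp (-((1 + s * c) * v)) =
      exp (-v) * exp (-(d + c * v) * s) := by
    rw [← Real.exp_add, ← Real.exp_add]; congr 1; ring
  simp_rw [integrand_eq]
  rw [← ofReal_integral_eq_lintegral_ofReal
      ((integrableOn_exp_mul_Ioi (neg_neg_of_pos hw) 0).const_mul _)
      (Eventually.of_forall fun s => by positivity),
    integral_const_mul, integral_exp_mul_Ioi (neg_neg_of_pos hw), mul_zero, Real.exp_zero,
    neg_div_neg_eq, mul_one_div]

section Scaling

variable {E : Type*} [NormedAddCommGroup E] [NormedSpace ℝ E] [FiniteDimensional ℝ E]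
  [MeasurableSpace E] [BorelSpace E] {μ : Measure E} [μ.IsAddHaarMeasure]

lemma ofReal_pow_inv_mul_setLIntegral_le {φ : E → ℝ≥0∞} (hφ : Measurable φ) {A : Set E}
    (hA : MeasurableSet A) (star : ∀ x, ∀ t : ℝ, 1 ≤ t → t • x ∈ A → x ∈ A) {t : ℝ} (ht : 1 ≤ t) :
    ENNReal.ofReal (t ^ finrank ℝ E)⁻¹ * ∫⁻ x in A, φ x ∂μ ≤ ∫⁻ x in A, φ (t • x) ∂μ := by
  have ht₀ : 0 < t := zero_lt_one.trans_le ht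
  have change_of_variables := lintegral_map (μ := μ) (hφ.indicator hA) (measurable_const_smul t)
  rw [Measure.map_addHaar_smul μ ht₀.ne', lintegral_smul_measure, abs_of_pos (by positivity),
    smul_eq_mul, lintegral_indicator hA] at change_of_variables
  rw [change_of_variables, ← lintegral_indicator hA]
  refine lintegral_mono fun x => ?_
  by_cases hx : t • x ∈ A
  · simp [hx, star x t ht hx]
  · simp [hx]

namespace IsConvexHomogeneous

variable {p : ℝ} {V : E → ℝ}

lemma ofReal_rpow_neg_mul_setLIntegral_exp_le (hV : IsConvexHomogeneous p V) {A : Set E}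
    (hA : MeasurableSet A) (star : ∀ x, ∀ t : ℝ, 1 ≤ t → t • x ∈ A → x ∈ A) {q : ℝ} (hq : 1 ≤ q) :
    ENNReal.ofReal (q ^ (-(finrank ℝ E / p))) * ∫⁻ x in A, ENNReal.ofReal (exp (-V x)) ∂μ ≤
      ∫⁻ x in A, ENNReal.ofReal (exp (-(q * V x))) ∂μ := by
  have hp : 0 < p := zero_lt_one.trans hV.one_lt
  have hq₀ : 0 < q := zero_lt_one.trans_le hq
  have hVc := hV.continuous
  have map_smul_root (x : E) : V (q ^ (1 / p) • x) = q * V x := by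
    rw [hV.map_smul x _ (by positivity), ← Real.rpow_mul hq₀.le, one_div_mul_cancel hp.ne',
      Real.rpow_one]
  have root_pow : q ^ (-(finrank ℝ E / p)) = ((q ^ (1 / p)) ^ finrank ℝ E)⁻¹ := by
    rw [← Real.rpow_natCast, ← Real.rpow_mul hq₀.le, Real.rpow_neg hq₀.le]
    congr 2
    ring
  simp_rw [root_pow, ← map_smul_root]
  exact ofReal_pow_inv_mul_setLIntegral_le (φ := fun x => ENNReal.ofReal (exp (-V x)))
    (by fun_prop) hA star (Real.one_le_rpow hq (by positivity))

lemma concavityExponent_mul_setLIntegral_le [Nontrivial E] (hV : IsConvexHomogeneous p V)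
    {A : Set E} (hA : MeasurableSet A) (star : ∀ x, ∀ t : ℝ, 1 ≤ t → t • x ∈ A → x ∈ A) :
    ENNReal.ofReal (concavityExponent (finrank ℝ E) p) *
        ∫⁻ x in A, ENNReal.ofReal (exp (-V x)) ∂μ ≤
      ∫⁻ x in A, ENNReal.ofReal (exp (-V x) / (finrank ℝ E + p / (p - 1) * V x)) ∂μ := by
  have hp := hV.one_lt
  have hd : (0 : ℝ) < finrank ℝ E := mod_cast finrank_pos
  have hc : 0 < p / (p - 1) := div_pos (by linarith) (by linarith)
  have hVc := hV.continuous
  have weight_pos (x : E) : 0 < finrank ℝ E + p / (p - 1) * V x :=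
    add_pos_of_pos_of_nonneg hd (mul_nonneg hc.le (hV.nonneg x))
  simp_rw [fun x => ofReal_exp_neg_div_add_mul_eq_lintegral (weight_pos x)]
  rw [lintegral_lintegral_swap (by fun_prop), concavityExponent,
    ofReal_integral_eq_lintegral_ofReal (integrableOn_concavityExponent_integrand hd hp)
      ((ae_restrict_mem measurableSet_Ioi).mono fun s hs =>
        (concavityExponent_integrand_pos hp hs).le),
    ← lintegral_mul_const _ (by fun_prop)]
  refine setLIntegral_mono' measurableSet_Ioi fun s (hs : 0 < s) => ?_
  simp_rw [ENNReal.ofReal_mul (exp_pos _).le]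
  rw [lintegral_const_mul _ (by fun_prop), mul_assoc]
  gcongr
  exact hV.ofReal_rpow_neg_mul_setLIntegral_exp_le hA star
    (le_add_of_nonneg_right (by positivity))

end IsConvexHomogeneous

end Scaling

/-! ### Gibbs measures of convex bodies -/

/-- The measure with density `e ^ (-V)` with respect to `μ`. -/
noncomputable def gibbsMeasure {E : Type*} [MeasurableSpace E] (μ : Measure E) (V : E → ℝ) :
    Measure E :=
  μ.withDensity fun x => ENNReal.ofReal (exp (-V x))

/-- A bounded convex set with nonempty interior containing the origin; unlike a convex body in the
strict sense it need not be closed. -/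
structure IsPointedConvexBody {E : Type*} [NormedAddCommGroup E] [NormedSpace ℝ E] (K : Set E) :
    Prop where
  isBounded : Bornology.IsBounded K
  convex : Convex ℝ K
  interior_nonempty : (interior K).Nonempty
  zero_mem : 0 ∈ K

lemma smul_subset_smul_of_le {E : Type*} [AddCommGroup E] [Module ℝ E] {K : Set E}
    (hK : Convex ℝ K) (h₀ : 0 ∈ K) {u v : ℝ} (hu : 0 ≤ u) (huv : u ≤ v) : u • K ⊆ v • K := by
  rintro _ ⟨x, hx, rfl⟩
  obtain rfl | hv := (hu.trans huv).eq_or_lt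
  · exact ⟨x, hx, by simp only [le_antisymm huv hu]⟩
  · refine ⟨(u / v) • x,
      hK.smul_mem_of_zero_mem h₀ hx ⟨by positivity, (div_le_one hv).2 huv⟩, ?_⟩
    simp only [smul_smul, mul_div_cancel₀ _ hv.ne']

namespace IsPointedConvexBody

variable {E : Type*} [NormedAddCommGroup E] [NormedSpace ℝ E] {K L : Set E}

lemma mem_interior_of_smul_mem_interior (hK : IsPointedConvexBody K) {x : E} {t : ℝ} (ht : 1 ≤ t)
    (hx : t • x ∈ interior K) : x ∈ interior K := by
  have ht₀ : 0 < t := zero_lt_one.trans_le ht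
  have := hK.convex.combo_interior_self_mem_interior hx hK.zero_mem (inv_pos.2 ht₀)
    (sub_nonneg.2 (inv_le_one_of_one_le₀ ht)) (add_sub_cancel _ _)
  rwa [smul_zero, add_zero, smul_smul, inv_mul_cancel₀ ht₀.ne', one_smul] at this

lemma smul (hK : IsPointedConvexBody K) {c : ℝ} (hc : c ≠ 0) : IsPointedConvexBody (c • K) where
  isBounded := hK.isBounded.smul₀ c
  convex := hK.convex.smul c
  interior_nonempty := interior_smul₀ hc K ▸ hK.interior_nonempty.smul_set
  zero_mem := ⟨0, hK.zero_mem, smul_zero c⟩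

lemma sub_smul_add_smul (hK : IsPointedConvexBody K) (hL : IsPointedConvexBody L) {t : ℝ}
    (ht : t ∈ Icc (0 : ℝ) 1) : IsPointedConvexBody ((1 - t) • K + t • L) where
  isBounded := (hK.isBounded.smul₀ _).add (hL.isBounded.smul₀ _)
  convex := (hK.convex.smul _).add (hL.convex.smul _)
  interior_nonempty := by
    obtain rfl | ht₀ := ht.1.eq_or_lt
    · refine hK.interior_nonempty.mono (interior_mono fun x hx => ?_)
      exact ⟨x, ⟨x, hx, by simp⟩, 0, ⟨0, hL.zero_mem, by simp⟩, by simp⟩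
    · have hsub : t • L ⊆ (1 - t) • K + t • L := fun x hx =>
        ⟨0, ⟨0, hK.zero_mem, by simp⟩, x, hx, by simp⟩
      exact (hL.smul ht₀.ne').interior_nonempty.mono (interior_mono hsub)
  zero_mem := ⟨0, ⟨0, hK.zero_mem, by simp⟩, 0, ⟨0, hL.zero_mem, by simp⟩, by simp⟩

lemma smul_sub_smul_add_smul_subset (hK : IsPointedConvexBody K) (hL : IsPointedConvexBody L)
    {s t c : ℝ} (ht : t ∈ Icc (0 : ℝ) 1) (hc : 0 ≤ c) (hcs : c * t ≤ s)
    (hcs' : c * (1 - t) ≤ 1 - s) :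
    c • ((1 - t) • K + t • L) ⊆ (1 - s) • K + s • L := by
  rw [smul_add, smul_smul, smul_smul]
  exact add_subset_add
    (smul_subset_smul_of_le hK.convex hK.zero_mem (mul_nonneg hc (sub_nonneg.2 ht.2)) hcs')
    (smul_subset_smul_of_le hL.convex hL.zero_mem (mul_nonneg hc ht.1) hcs)

lemma half_smul_add_eq (hK : IsPointedConvexBody K) (hL : IsPointedConvexBody L) {t h : ℝ}
    (h₁ : t - h ∈ Icc (0 : ℝ) 1) (h₂ : t + h ∈ Icc (0 : ℝ) 1) :
    (1 / 2 : ℝ) • (((1 - (t - h)) • K + (t - h) • L) + ((1 - (t + h)) • K + (t + h) • L)) =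
      (1 - t) • K + t • L := by
  rw [add_add_add_comm, ← hK.convex.add_smul (by linarith [h₁.2]) (by linarith [h₂.2]),
    ← hL.convex.add_smul h₁.1 h₂.1, smul_add, smul_smul, smul_smul]
  congr 2 <;> ring

end IsPointedConvexBody

lemma gibbsMeasure_interior {E : Type*} [NormedAddCommGroup E] [NormedSpace ℝ E]
    [FiniteDimensional ℝ E] [MeasurableSpace E] [BorelSpace E] {μ : Measure E} [μ.IsAddHaarMeasure]
    {V : E → ℝ} {A : Set E} (hA : Convex ℝ A) :
    gibbsMeasure μ V (interior A) = gibbsMeasure μ V A :=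
  measure_congr (interior_ae_eq_of_null_frontier
    (withDensity_absolutelyContinuous _ _ (hA.addHaar_frontier μ)))

namespace IsConvexHomogeneous

variable {E : Type*} [NormedAddCommGroup E] [NormedSpace ℝ E] [FiniteDimensional ℝ E]
  {p : ℝ} {V : E → ℝ}

lemma isConvexDensity_interior (hV : IsConvexHomogeneous p V) {K : Set E}
    (hK : IsPointedConvexBody K) : IsConvexDensity (fun x => exp (-V x)) (interior K) where
  isOpen := isOpen_interior
  convex := hK.convex.interior
  isBounded := hK.isBounded.subset interior_subset
  nonempty := hK.interior_nonempty
  continuousOn := (Real.continuous_exp.comp hV.continuous.neg).continuousOn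
  pos _ _ := exp_pos _
  bddAbove := ⟨1, forall_mem_image.2 fun x _ =>
    Real.exp_le_one_iff.2 (neg_nonpos.2 (hV.nonneg x))⟩

variable [MeasurableSpace E] {μ : Measure E} [μ.IsAddHaarMeasure]

lemma gibbsMeasure_lt_top (hV : IsConvexHomogeneous p V) {A : Set E}
    (hA : Bornology.IsBounded A) : gibbsMeasure μ V A < ∞ := by
  have gibbs_le : gibbsMeasure μ V ≤ μ := by
    refine (withDensity_mono (g := 1) (Eventually.of_forall fun x => ?_)).trans_eq withDensity_one
    exact ENNReal.ofReal_le_one.2 (Real.exp_le_one_iff.2 (neg_nonpos.2 (hV.nonneg x)))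
  exact (gibbs_le A).trans_lt hA.measure_lt_top

variable [BorelSpace E]

lemma gibbsMeasure_real_eq (hV : IsConvexHomogeneous p V) {K : Set E}
    (hK : IsPointedConvexBody K) :
    (gibbsMeasure μ V).real K = ∫ x in interior K, exp (-V x) ∂μ := by
  rw [measureReal_def, ← gibbsMeasure_interior hK.convex, gibbsMeasure,
    withDensity_apply _ isOpen_interior.measurableSet,
    ← ofReal_integral_eq_lintegral_ofReal (hV.isConvexDensity_interior hK).integrableOn
      (Eventually.of_forall fun x => (exp_pos _).le),
    ENNReal.toReal_ofReal (integral_nonneg fun x => (exp_pos _).le)]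

lemma gibbsMeasure_real_pos (hV : IsConvexHomogeneous p V) {K : Set E}
    (hK : IsPointedConvexBody K) : 0 < (gibbsMeasure μ V).real K := by
  rw [hV.gibbsMeasure_real_eq hK]
  exact (hV.isConvexDensity_interior hK).setIntegral_pos

lemma pow_mul_gibbsMeasure_real_le (hV : IsConvexHomogeneous p V) {K : Set E}
    (hK : IsPointedConvexBody K) {c : ℝ} (hc : 0 < c) (hc₁ : c ≤ 1) :
    c ^ finrank ℝ E * (gibbsMeasure μ V).real K ≤ (gibbsMeasure μ V).real (c • K) := by
  have scaling := Measure.setIntegral_comp_smul μ (fun x => exp (-V x)) (interior K) hc.ne'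
  rw [abs_of_pos (by positivity), smul_eq_mul, ← interior_smul₀ hc.ne',
    ← hV.gibbsMeasure_real_eq (hK.smul hc.ne'), eq_inv_mul_iff_mul_eq₀ (by positivity)] at scaling
  rw [← scaling, hV.gibbsMeasure_real_eq hK]
  have hVc := hV.continuous
  gcongr c ^ _ * ?_
  refine integral_mono_of_nonneg (Eventually.of_forall fun x => (exp_pos _).le) ?_
    (Eventually.of_forall fun x => ?_)
  · exact ((show Continuous fun x => exp (-V (c • x)) by fun_prop).continuousOn.integrableOn_compact
      hK.isBounded.isCompact_closure).mono_set (interior_subset.trans subset_closure)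
  · simp only
    rw [Real.exp_le_exp, hV.map_smul x c hc, neg_le_neg_iff]
    exact mul_le_of_le_one_left (hV.nonneg x)
      (Real.rpow_le_one hc.le hc₁ (zero_le_one.trans hV.one_lt.le))

end IsConvexHomogeneous

/-! ### The local midpoint inequality -/

lemma eventually_forall_one_le_div {P : ℝ → Prop} (hP : ∀ᶠ s in 𝓝 0, P s) :
    ∀ᶠ ε in 𝓝 0, ∀ w : ℝ, 1 ≤ w → P (ε / w) := by
  obtain ⟨r, hr, hball⟩ := Metric.eventually_nhds_iff.1 hP
  filter_upwards [Metric.ball_mem_nhds 0 hr] with ε hε w hw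
  refine hball ?_
  rw [mem_ball, dist_zero_right] at hε
  rw [dist_zero_right, norm_div, Real.norm_of_nonneg (zero_le_one.trans hw)]
  exact (div_le_self (norm_nonneg ε) hw).trans_lt hε

-- The exponential dominates its linearisation, and `s` maximises `ε * s - C * w * s ^ 2`.
lemma exp_half_mul_add_le_exp {C w : ℝ} (hC : 0 < C) (hw : 0 < w) (ε v : ℝ) :
    exp (ε / 2) * (exp (-v) + ε ^ 2 / (4 * C) * (exp (-v) / w)) ≤
      exp (ε / 2 - v + (ε * (ε / (2 * C * w)) - C * w * (ε / (2 * C * w)) ^ 2)) := by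
  have optimum : ε * (ε / (2 * C * w)) - C * w * (ε / (2 * C * w)) ^ 2 = ε ^ 2 / (4 * C) / w := by
    field_simp
    ring
  calc exp (ε / 2) * (exp (-v) + ε ^ 2 / (4 * C) * (exp (-v) / w))
      = exp (ε / 2 - v) * (ε ^ 2 / (4 * C) / w + 1) := by
        rw [sub_eq_add_neg, Real.exp_add]; ring
    _ ≤ exp (ε / 2 - v) * exp (ε ^ 2 / (4 * C) / w) := by gcongr; exact Real.add_one_le_exp _
    _ = _ := by rw [← Real.exp_add, optimum]

lemma exp_neg_mul_prod_rpow_le {n : ℕ} {C s : ℝ}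
    (hs : ∀ l : ℝ, 0 < l → exp (-(C * s ^ 2)) * l ^ (1 / 2 + s) ≤ (1 + l) / 2)
    {l : Fin n → ℝ} (hl : ∀ i, 0 < l i) :
    exp (-(n * C * s ^ 2)) * (∏ i, l i) ^ (1 / 2 + s) ≤ ∏ i, (1 - 1 / 2 + 1 / 2 * l i) := by
  calc exp (-(n * C * s ^ 2)) * (∏ i, l i) ^ (1 / 2 + s)
      = ∏ i, exp (-(C * s ^ 2)) * l i ^ (1 / 2 + s) := by
        rw [Finset.prod_mul_distrib, Finset.prod_const, Finset.card_univ, Fintype.card_fin,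
          ← Real.exp_nat_mul, Real.finsetProd_rpow _ _ fun i _ => (hl i).le]
        congr 2
        ring
    _ ≤ ∏ i, (1 - 1 / 2 + 1 / 2 * l i) :=
        Finset.prod_le_prod (fun i _ => by have := hl i; positivity)
          fun i _ => (hs (l i) (hl i)).trans_eq (by ring)

namespace IsConvexHomogeneous

lemma eventually_exp_mul_add_le_prod_mul_exp_neg_midpoint {E : Type*} [AddCommGroup E]
    [Module ℝ E] {p : ℝ} {V : E → ℝ} (hV : IsConvexHomogeneous p V) {n : ℕ} (hn : 0 < n) {C : ℝ}
    (hC : 2 < C) :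
    ∀ᶠ ε in 𝓝 (0 : ℝ), ∀ (x y : E) (l : Fin n → ℝ), (∀ i, 0 < l i) →
      ∏ i, l i = exp (ε + V y - V x) →
      exp (ε / 2) * (exp (-V x) +
          ε ^ 2 / (4 * C) * (exp (-V x) / (n + p / (p - 1) * V x))) ≤
        (∏ i, (1 - 1 / 2 + 1 / 2 * l i)) * exp (-V ((1 - 1 / 2 : ℝ) • x + (1 / 2 : ℝ) • y)) := by
  filter_upwards [eventually_forall_one_le_div ((eventually_exp_neg_mul_rpow_le hC).and
    (hV.eventually_map_midpoint_le hC))] with ε hε x y l hl hprod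
  have hp : 0 < p - 1 := sub_pos.2 hV.one_lt
  have one_le_n : (1 : ℝ) ≤ n := mod_cast hn
  set w : ℝ := n + p / (p - 1) * V x with hw
  have one_le_w : 1 ≤ w :=
    le_add_of_le_of_nonneg one_le_n
      (mul_nonneg (div_nonneg (by linarith) hp.le) (hV.nonneg x))
  refine (exp_half_mul_add_le_exp (by linarith) (by linarith) ε (V x)).trans ?_
  obtain ⟨hs, midpoint_le⟩ := hε (2 * C * w) (by nlinarith)
  generalize ε / (2 * C * w) = s at *
  have midpoint_eq : (1 - 1 / 2 : ℝ) • x + (1 / 2 : ℝ) • y = (1 / 2 : ℝ) • (x + y) := by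
    rw [smul_add]; norm_num
  calc exp (ε / 2 - V x + (ε * s - C * w * s ^ 2))
      = exp (-(n * C * s ^ 2)) * exp (ε + V y - V x) ^ (1 / 2 + s) *
          exp (-((1 / 2 - s + C * (p / (p - 1)) * s ^ 2) * V x + (1 / 2 + s) * V y)) := by
        rw [← Real.exp_mul, ← Real.exp_add, ← Real.exp_add, hw]
        congr 1
        ring
    _ ≤ _ := by
        rw [midpoint_eq, ← hprod]
        refine mul_le_mul (exp_neg_mul_prod_rpow_le hs hl) ?_ (exp_pos _).le
          (Finset.prod_nonneg fun i _ => by linarith [hl i])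
        exact Real.exp_le_exp.2 (neg_le_neg (midpoint_le x y))

variable {E : Type*} [NormedAddCommGroup E] [NormedSpace ℝ E] [FiniteDimensional ℝ E]
  [MeasurableSpace E] [BorelSpace E] {μ : Measure E} [μ.IsAddHaarMeasure]
  {p : ℝ} {V : E → ℝ}

lemma ofReal_mul_gibbsMeasure_le_setLIntegral [Nontrivial E] (hV : IsConvexHomogeneous p V)
    {K : Set E} (hK : IsPointedConvexBody K) {a b : ℝ} (ha : 0 ≤ a) (hb : 0 ≤ b) :
    ENNReal.ofReal (a * (1 + b * concavityExponent (finrank ℝ E) p)) *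
        gibbsMeasure μ V K ≤
      ∫⁻ x in interior K, ENNReal.ofReal (a * (exp (-V x) +
        b * (exp (-V x) / (finrank ℝ E + p / (p - 1) * V x)))) ∂μ := by
  have hVc := hV.continuous
  have hp := hV.one_lt
  have hd : (0 : ℝ) < finrank ℝ E := mod_cast finrank_pos
  have exponent_pos := concavityExponent_pos hd hp
  have quotient_nonneg (x : E) : 0 ≤ exp (-V x) / (finrank ℝ E + p / (p - 1) * V x) :=
    div_nonneg (exp_pos _).le (add_nonneg hd.le
      (mul_nonneg (div_nonneg (by linarith) (by linarith)) (hV.nonneg x)))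
  simp_rw [ENNReal.ofReal_mul ha, fun x => ENNReal.ofReal_add (exp_pos (-V x)).le
    (mul_nonneg hb (quotient_nonneg x)), ENNReal.ofReal_mul hb]
  rw [lintegral_const_mul _ (by fun_prop), lintegral_add_left (by fun_prop),
    lintegral_const_mul _ (by fun_prop), mul_assoc, ← gibbsMeasure_interior hK.convex,
    gibbsMeasure, withDensity_apply _ isOpen_interior.measurableSet,
    ENNReal.ofReal_add zero_le_one (by positivity), ENNReal.ofReal_one,
    ENNReal.ofReal_mul hb, add_mul, one_mul, mul_assoc]
  gcongr
  exact hV.concavityExponent_mul_setLIntegral_le isOpen_interior.measurableSet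
    fun x t => hK.mem_interior_of_smul_mem_interior

lemma setLIntegral_le_gibbsMeasure_half_smul_add (hV : IsConvexHomogeneous p V) {A B : Set E}
    (hA : IsPointedConvexBody A) (hB : IsPointedConvexBody B) {ε : ℝ}
    (hAB : (gibbsMeasure μ V).real B = (gibbsMeasure μ V).real A * exp ε)
    {Φ : E → ℝ≥0∞} (hΦm : Measurable Φ)
    (hΦ : ∀ (x y : E) (l : Fin (finrank ℝ E) → ℝ), (∀ i, 0 < l i) →
      ∏ i, l i = exp (ε + V y - V x) →
      Φ x ≤ ENNReal.ofReal ((∏ i, (1 - 1 / 2 + 1 / 2 * l i)) *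
        exp (-V ((1 - 1 / 2 : ℝ) • x + (1 / 2 : ℝ) • y)))) :
    ∫⁻ x in interior A, Φ x ∂μ ≤ gibbsMeasure μ V ((1 / 2 : ℝ) • (A + B)) := by
  have hVc := hV.continuous
  set M : Set E := (1 / 2 : ℝ) • (interior A + interior B)
  have hMm : MeasurableSet M := (isOpen_interior.add_left.smul₀ (by norm_num)).measurableSet
  have hMAB : M ⊆ (1 / 2 : ℝ) • (A + B) :=
    smul_set_mono (add_subset_add interior_subset interior_subset)
  refine le_trans ?_ (measure_mono hMAB)
  rw [gibbsMeasure, withDensity_apply _ hMm, ← lintegral_indicator hMm]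
  refine KnotheTransportBound.addHaar μ (hV.isConvexDensity_interior hA)
    (hV.isConvexDensity_interior hB) hΦm (Measurable.indicator (by fun_prop) hMm) (t := 1 / 2)
    (by norm_num) fun x hx y hy l hl hlfg => ?_
  have hz : (1 - 1 / 2 : ℝ) • x + (1 / 2 : ℝ) • y ∈ M :=
    ⟨x + y, add_mem_add hx hy, by simp only [smul_add]; norm_num⟩
  rw [indicator_of_mem hz,
    ← ENNReal.ofReal_mul (Finset.prod_nonneg fun i _ => by linarith [hl i])]
  refine hΦ x y l hl ?_
  rw [← hV.gibbsMeasure_real_eq hA, ← hV.gibbsMeasure_real_eq hB, hAB] at hlfg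
  refine mul_right_cancel₀
    (mul_pos (exp_pos (-V y)) (hV.gibbsMeasure_real_pos (μ := μ) hA)).ne' ?_
  rw [hlfg, ← mul_assoc (exp (ε + V y - V x)), ← Real.exp_add, mul_left_comm, ← Real.exp_add,
    mul_comm]
  congr 2
  ring

lemma eventually_gibbsMeasure_midpoint_gain [Nontrivial E] (hV : IsConvexHomogeneous p V) {C : ℝ}
    (hC : 2 < C) :
    ∀ᶠ ε in 𝓝 (0 : ℝ), ∀ A B : Set E, IsPointedConvexBody A → IsPointedConvexBody B →
      (gibbsMeasure μ V).real B = (gibbsMeasure μ V).real A * exp ε →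
      exp (ε / 2) * (1 + ε ^ 2 / (4 * C) * concavityExponent (finrank ℝ E) p) *
          (gibbsMeasure μ V).real A ≤
        (gibbsMeasure μ V).real ((1 / 2 : ℝ) • (A + B)) := by
  filter_upwards [hV.eventually_exp_mul_add_le_prod_mul_exp_neg_midpoint
    (finrank_pos (R := ℝ) (M := E)) hC] with ε pointwise A B hA hB hAB
  have hVc := hV.continuous
  have exponent_pos : 0 < concavityExponent (finrank ℝ E) p :=
    concavityExponent_pos (Nat.cast_pos.2 finrank_pos) hV.one_lt
  have gain := (hV.ofReal_mul_gibbsMeasure_le_setLIntegral hA (exp_pos (ε / 2)).le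
    (by positivity : 0 ≤ ε ^ 2 / (4 * C))).trans
    (hV.setLIntegral_le_gibbsMeasure_half_smul_add hA hB hAB (by fun_prop)
      fun x y l hl hlp => ENNReal.ofReal_le_ofReal (pointwise x y l hl hlp))
  have gain_toReal := ENNReal.toReal_mono
    (hV.gibbsMeasure_lt_top ((hA.isBounded.add hB.isBounded).smul₀ (1 / 2 : ℝ))).ne gain
  rwa [ENNReal.toReal_mul, ENNReal.toReal_ofReal (by positivity)] at gain_toReal

end IsConvexHomogeneous

lemma one_add_exp_div_two_eq (x : ℝ) : (1 + exp x) / 2 = exp (x / 2) * cosh (x / 2) := by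
  rw [Real.cosh_eq, mul_div_assoc', mul_add, ← Real.exp_add, ← Real.exp_add, add_halves,
    add_neg_cancel, Real.exp_zero, add_comm]

lemma eventually_one_add_exp_rpow_div_two_le {a b : ℝ} (ha : 0 < a) (hab : a < b) :
    ∀ᶠ ε in 𝓝 (0 : ℝ), (1 + exp ε ^ a) / 2 ≤ (exp (ε / 2) * (1 + ε ^ 2 / 8 * b)) ^ a := by
  have slack : ∀ᶠ ε in 𝓝 (0 : ℝ), a * (1 + ε ^ 2 / 8 * b) < b :=
    (show ContinuousAt (fun ε : ℝ => a * (1 + ε ^ 2 / 8 * b)) 0 by fun_prop).eventually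
      (gt_mem_nhds (by simpa using hab))
  filter_upwards [slack] with ε hε
  have hb : 0 < b := ha.trans hab
  have base_pos : 0 < 1 + ε ^ 2 / 8 * b := by positivity
  have log_bound : a * (ε ^ 2 / 8) ≤ log (1 + ε ^ 2 / 8 * b) := by
    refine le_trans ?_ (Real.one_sub_inv_le_log_of_pos base_pos)
    rw [← one_div, one_sub_div base_pos.ne', add_sub_cancel_left, le_div_iff₀ base_pos]
    nlinarith [sq_nonneg ε]
  have cosh_bound : cosh (ε * a / 2) ≤ (1 + ε ^ 2 / 8 * b) ^ a := by
    refine (Real.cosh_le_exp_half_sq _).trans ?_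
    rw [Real.rpow_def_of_pos base_pos, Real.exp_le_exp]
    nlinarith
  rw [Real.mul_rpow (exp_pos _).le base_pos.le, ← Real.exp_mul, ← Real.exp_mul,
    one_add_exp_div_two_eq, div_mul_eq_mul_div]
  gcongr

lemma IsConvexHomogeneous.eventually_gibbsMeasure_rpow_midpoint_le {E : Type*}
    [NormedAddCommGroup E] [NormedSpace ℝ E] [FiniteDimensional ℝ E] [Nontrivial E]
    [MeasurableSpace E] [BorelSpace E] {μ : Measure E} [μ.IsAddHaarMeasure] {p : ℝ} {V : E → ℝ}
    (hV : IsConvexHomogeneous p V) {a : ℝ} (ha : 0 < a)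
    (ha' : a < concavityExponent (finrank ℝ E) p) :
    ∀ᶠ ε in 𝓝 (0 : ℝ), ∀ A B : Set E, IsPointedConvexBody A → IsPointedConvexBody B →
      log ((gibbsMeasure μ V).real B) - log ((gibbsMeasure μ V).real A) = ε →
      ((gibbsMeasure μ V).real A ^ a + (gibbsMeasure μ V).real B ^ a) / 2 ≤
        (gibbsMeasure μ V).real ((1 / 2 : ℝ) • (A + B)) ^ a := by
  set α := concavityExponent (finrank ℝ E) p
  have one_lt_ratio : 1 < α / a := (one_lt_div ha).2 ha'
  have hab : a < 2 * α / (α / a + 1) := by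
    rw [lt_div_iff₀ (by linarith), mul_add, mul_div_cancel₀ _ ha.ne']
    linarith
  filter_upwards [eventually_one_add_exp_rpow_div_two_le ha hab,
    hV.eventually_gibbsMeasure_midpoint_gain (μ := μ) (C := α / a + 1) (by linarith)]
    with ε two_point gain A B hA hB hε
  have posA := hV.gibbsMeasure_real_pos (μ := μ) hA
  have posB := hV.gibbsMeasure_real_pos (μ := μ) hB
  have hAB : (gibbsMeasure μ V).real B = (gibbsMeasure μ V).real A * exp ε := by
    rw [← hε, Real.exp_sub, Real.exp_log posA, Real.exp_log posB, mul_div_cancel₀ _ posA.ne']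
  have gain_AB := gain A B hA hB hAB
  change exp (ε / 2) * (1 + ε ^ 2 / (4 * (α / a + 1)) * α) * _ ≤ _ at gain_AB
  rw [show ε ^ 2 / (4 * (α / a + 1)) * α = ε ^ 2 / 8 * (2 * α / (α / a + 1)) by
    field_simp; ring] at gain_AB
  have factor_nonneg : 0 ≤ exp (ε / 2) * (1 + ε ^ 2 / 8 * (2 * α / (α / a + 1))) := by
    have := ha.trans hab
    positivity
  calc ((gibbsMeasure μ V).real A ^ a + (gibbsMeasure μ V).real B ^ a) / 2
      = (1 + exp ε ^ a) / 2 * (gibbsMeasure μ V).real A ^ a := by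
        rw [hAB, Real.mul_rpow posA.le (exp_pos _).le]; ring
    _ ≤ (exp (ε / 2) * (1 + ε ^ 2 / 8 * (2 * α / (α / a + 1)))) ^ a *
          (gibbsMeasure μ V).real A ^ a := by gcongr
    _ ≤ (gibbsMeasure μ V).real ((1 / 2 : ℝ) • (A + B)) ^ a := by
        rw [← Real.mul_rpow factor_nonneg posA.le]
        exact Real.rpow_le_rpow (mul_nonneg factor_nonneg posA.le) gain_AB ha.le

/-! ### From local to global concavity -/

-- A minimum of `ψ + η (t - a) (b - t)` cannot be interior: the perturbation is strictly concave.
lemma nonneg_of_lowerSemicontinuousOn_of_midpoint_le {ψ : ℝ → ℝ} {a b : ℝ}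
    (hψ : LowerSemicontinuousOn ψ (Icc a b)) (ha : 0 ≤ ψ a) (hb : 0 ≤ ψ b)
    (midpoint : ∀ t ∈ Ioo a b, ∀ᶠ h in 𝓝[>] 0, (ψ (t - h) + ψ (t + h)) / 2 ≤ ψ t) :
    ∀ t ∈ Icc a b, 0 ≤ ψ t := by
  intro t ht
  have perturbed_nonneg {η : ℝ} (hη : 0 < η) : 0 ≤ ψ t + η * ((t - a) * (b - t)) := by
    have hlsc : LowerSemicontinuousOn (fun t => ψ t + η * ((t - a) * (b - t))) (Icc a b) :=
      hψ.add (Continuous.continuousOn (by fun_prop)).lowerSemicontinuousOn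
    obtain ⟨t₀, ht₀, hmin⟩ := hlsc.exists_isMinOn ⟨t, ht⟩ isCompact_Icc
    refine le_trans ?_ (hmin ht)
    obtain rfl | hat₀ := ht₀.1.eq_or_lt
    · simpa using ha
    obtain rfl | hbt₀ := ht₀.2.eq_or_lt
    · simpa using hb
    obtain ⟨h, hmid, hh₀, hh⟩ := ((midpoint t₀ ⟨hat₀, hbt₀⟩).and (Ioo_mem_nhdsGT
      (lt_min (sub_pos.2 hat₀) (sub_pos.2 hbt₀)))).exists
    obtain ⟨hha, hhb⟩ := lt_min_iff.1 hh
    have le_left := hmin (show t₀ - h ∈ Icc a b from ⟨by linarith, by linarith⟩)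
    have le_right := hmin (show t₀ + h ∈ Icc a b from ⟨by linarith, by linarith⟩)
    simp only [mem_ofPred_eq] at le_left le_right
    nlinarith [mul_pos hη (pow_pos hh₀ 2)]
  have limit : Tendsto (fun η : ℝ => ψ t + η * ((t - a) * (b - t))) (𝓝[>] 0) (𝓝 (ψ t)) := by
    refine Tendsto.mono_left ?_ nhdsWithin_le_nhds
    exact (show Continuous fun η : ℝ => ψ t + η * ((t - a) * (b - t)) by fun_prop).tendsto' _ _
      (by simp)
  exact ge_of_tendsto limit (eventually_mem_nhdsWithin.mono fun η hη => perturbed_nonneg hη)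

lemma chord_le_of_lowerSemicontinuousOn_of_midpoint_le {φ : ℝ → ℝ}
    (hφ : LowerSemicontinuousOn φ (Icc 0 1))
    (midpoint : ∀ t ∈ Ioo (0 : ℝ) 1, ∀ᶠ h in 𝓝[>] 0, (φ (t - h) + φ (t + h)) / 2 ≤ φ t)
    {t : ℝ} (ht : t ∈ Icc (0 : ℝ) 1) : (1 - t) * φ 0 + t * φ 1 ≤ φ t := by
  have := nonneg_of_lowerSemicontinuousOn_of_midpoint_le
    (ψ := fun t => φ t + -((1 - t) * φ 0 + t * φ 1))
    (hφ.add (Continuous.continuousOn (by fun_prop)).lowerSemicontinuousOn) (by simp) (by simp)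
    (fun t ht => (midpoint t ht).mono fun h hh => by linarith) t ht
  linarith

lemma exists_lt_rpow_mul {x y : ℝ} (r : ℝ) (hxy : x < y) : ∃ c ∈ Ioo (0 : ℝ) 1, x < c ^ r * y := by
  have hcont : ContinuousAt (fun c : ℝ => c ^ r * y) 1 := by
    refine ContinuousAt.mul (ContinuousAt.rpow_const (by fun_prop) (by norm_num)) (by fun_prop)
  have near_one : ∀ᶠ c in 𝓝[<] (1 : ℝ), x < c ^ r * y :=
    nhdsWithin_le_nhds (hcont.eventually (lt_mem_nhds (by simpa using hxy)))
  exact ((near_one.and (Ioo_mem_nhdsLT zero_lt_one)).exists).imp fun c hc => ⟨hc.2, hc.1⟩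

lemma eventually_mul_le_nhdsWithin_Ici {c t : ℝ} (hc : c ∈ Ioo (0 : ℝ) 1) (ht : 0 ≤ t) :
    ∀ᶠ s in 𝓝[Ici 0] t, c * t ≤ s := by
  obtain rfl | ht := ht.eq_or_lt
  · filter_upwards [self_mem_nhdsWithin] with s hs
    simpa using hs
  · exact nhdsWithin_le_nhds (le_mem_nhds (by nlinarith [hc.2]))

/-- The growth control enjoyed by the measure of `(1 - t) • K + t • L`: scaling the body at time
`t` by `c` fits it into the body at time `s` as soon as `c t ≤ s` and `c (1 - t) ≤ 1 - s`, at the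
cost of a factor `c ^ r`. -/
def HasScalingBound (r : ℝ) (F : ℝ → ℝ) : Prop :=
  ∀ ⦃s⦄, s ∈ Icc (0 : ℝ) 1 → ∀ ⦃t⦄, t ∈ Icc (0 : ℝ) 1 → ∀ ⦃c : ℝ⦄, 0 < c → c * t ≤ s →
    c * (1 - t) ≤ 1 - s → c ^ r * F t ≤ F s

namespace HasScalingBound

variable {r : ℝ} {F : ℝ → ℝ}

lemma rpow (hF : HasScalingBound r F) (F_nonneg : ∀ t ∈ Icc (0 : ℝ) 1, 0 ≤ F t) {a : ℝ}
    (ha : 0 ≤ a) : HasScalingBound (r * a) fun t => F t ^ a := by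
  intro s hs t ht c hc hcs hcs'
  have := F_nonneg t ht
  rw [Real.rpow_mul hc.le, ← Real.mul_rpow (by positivity) this]
  exact Real.rpow_le_rpow (by positivity) (hF hs ht hc hcs hcs') ha

lemma lowerSemicontinuousOn (hF : HasScalingBound r F) : LowerSemicontinuousOn F (Icc 0 1) := by
  intro t ht y hy
  obtain ⟨c, hc, hyc⟩ := exists_lt_rpow_mul r hy
  have reflect : Tendsto (fun s : ℝ => 1 - s) (𝓝[Icc 0 1] t) (𝓝[Ici 0] (1 - t)) :=
    ((continuous_const.sub continuous_id).continuousWithinAt).tendsto_nhdsWithin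
      fun s hs => sub_nonneg.2 hs.2
  filter_upwards [self_mem_nhdsWithin,
    nhdsWithin_mono t (fun s (hs : s ∈ Icc (0 : ℝ) 1) => hs.1)
      (eventually_mul_le_nhdsWithin_Ici hc ht.1),
    reflect.eventually (eventually_mul_le_nhdsWithin_Ici hc (sub_nonneg.2 ht.2))] with s hs hcs hcs'
  exact hyc.trans_le (hF hs ht hc.1 hcs hcs')

lemma continuousAt (hF : HasScalingBound r F) {t : ℝ} (ht : t ∈ Ioo (0 : ℝ) 1) :
    ContinuousAt F t := by
  refine continuousAt_iff_lower_upperSemicontinuousAt.2 ⟨?_, fun y hy => ?_⟩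
  · exact fun y hy => nhdsWithin_eq_nhds.2 (Icc_mem_nhds ht.1 ht.2) ▸
      hF.lowerSemicontinuousOn t (Ioo_subset_Icc_self ht) y hy
  · obtain ⟨c, hc, hyc⟩ := exists_lt_rpow_mul r hy
    have left : ∀ᶠ s in 𝓝 t, c * s < t :=
      (show ContinuousAt (fun s => c * s) t by fun_prop).eventually
        (gt_mem_nhds (by nlinarith [ht.1, hc.2]))
    have right : ∀ᶠ s in 𝓝 t, c * (1 - s) < 1 - t :=
      (show ContinuousAt (fun s => c * (1 - s)) t by fun_prop).eventually
        (gt_mem_nhds (by nlinarith [ht.2, hc.2]))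
    filter_upwards [Icc_mem_nhds ht.1 ht.2, left, right] with s hs hcs hcs'
    have := (hF (Ioo_subset_Icc_self ht) hs hc.1 hcs.le hcs'.le).trans_lt hyc
    exact lt_of_mul_lt_mul_left this (Real.rpow_nonneg hc.1.le r)

end HasScalingBound

section BrunnMinkowski

variable {E : Type*} [NormedAddCommGroup E] [NormedSpace ℝ E] [FiniteDimensional ℝ E]
  [MeasurableSpace E] [BorelSpace E] {μ : Measure E} [μ.IsAddHaarMeasure] {p : ℝ} {V : E → ℝ}
  {K L : Set E}

lemma IsConvexHomogeneous.hasScalingBound_gibbsMeasure (hV : IsConvexHomogeneous p V)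
    (hK : IsPointedConvexBody K) (hL : IsPointedConvexBody L) :
    HasScalingBound (finrank ℝ E) fun t => (gibbsMeasure μ V).real ((1 - t) • K + t • L) := by
  intro s hs t ht c hc hcs hcs'
  have hc₁ : c ≤ 1 := by linarith
  rw [Real.rpow_natCast]
  refine (hV.pow_mul_gibbsMeasure_real_le (hK.sub_smul_add_smul hL ht) hc hc₁).trans ?_
  exact measureReal_mono (hK.smul_sub_smul_add_smul_subset hL ht hc.le hcs hcs')
    (hV.gibbsMeasure_lt_top (hK.sub_smul_add_smul hL hs).isBounded).ne

variable [Nontrivial E]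

lemma IsConvexHomogeneous.eventually_gibbsMeasure_rpow_le (hV : IsConvexHomogeneous p V)
    (hK : IsPointedConvexBody K) (hL : IsPointedConvexBody L) {a : ℝ} (ha : 0 < a)
    (ha' : a < concavityExponent (finrank ℝ E) p) {t : ℝ} (ht : t ∈ Ioo (0 : ℝ) 1) :
    ∀ᶠ h in 𝓝 (0 : ℝ),
      ((gibbsMeasure μ V).real ((1 - (t - h)) • K + (t - h) • L) ^ a +
        (gibbsMeasure μ V).real ((1 - (t + h)) • K + (t + h) • L) ^ a) / 2 ≤
      (gibbsMeasure μ V).real ((1 - t) • K + t • L) ^ a := by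
  set F : ℝ → ℝ := fun t => (gibbsMeasure μ V).real ((1 - t) • K + t • L)
  have log_continuous : ContinuousAt (fun s => log (F s)) t :=
    ((hV.hasScalingBound_gibbsMeasure hK hL).continuousAt ht).log
      (hV.gibbsMeasure_real_pos (hK.sub_smul_add_smul hL (Ioo_subset_Icc_self ht))).ne'
  have sub_tendsto : Tendsto (fun h => t - h) (𝓝 0) (𝓝 t) :=
    Continuous.tendsto' (by fun_prop) _ _ (sub_zero t)
  have add_tendsto : Tendsto (fun h => t + h) (𝓝 0) (𝓝 t) :=
    Continuous.tendsto' (by fun_prop) _ _ (add_zero t)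
  have log_increment : Tendsto (fun h => log (F (t + h)) - log (F (t - h))) (𝓝 0) (𝓝 0) := by
    simpa using (log_continuous.tendsto.comp add_tendsto).sub
      (log_continuous.tendsto.comp sub_tendsto)
  filter_upwards [log_increment.eventually
      (hV.eventually_gibbsMeasure_rpow_midpoint_le (μ := μ) ha ha'),
    sub_tendsto.eventually (Icc_mem_nhds ht.1 ht.2),
    add_tendsto.eventually (Icc_mem_nhds ht.1 ht.2)] with h midpoint h_sub h_add
  rw [← hK.half_smul_add_eq hL h_sub h_add]
  exact midpoint _ _ (hK.sub_smul_add_smul hL h_sub) (hK.sub_smul_add_smul hL h_add) rfl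

lemma IsConvexHomogeneous.gibbsMeasure_rpow_chord_le_of_lt (hV : IsConvexHomogeneous p V)
    (hK : IsPointedConvexBody K) (hL : IsPointedConvexBody L) {a : ℝ} (ha : 0 < a)
    (ha' : a < concavityExponent (finrank ℝ E) p) {t : ℝ} (ht : t ∈ Icc (0 : ℝ) 1) :
    (1 - t) * (gibbsMeasure μ V).real K ^ a + t * (gibbsMeasure μ V).real L ^ a ≤
      (gibbsMeasure μ V).real ((1 - t) • K + t • L) ^ a := by
  have hzeroK : (0 : ℝ) • K = 0 := zero_smul_set ⟨0, hK.zero_mem⟩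
  have hzeroL : (0 : ℝ) • L = 0 := zero_smul_set ⟨0, hL.zero_mem⟩
  have lsc := ((hV.hasScalingBound_gibbsMeasure (μ := μ) hK hL).rpow
    (fun _ _ => measureReal_nonneg) ha.le).lowerSemicontinuousOn
  have chord := chord_le_of_lowerSemicontinuousOn_of_midpoint_le lsc
    (fun s hs => nhdsWithin_le_nhds (hV.eventually_gibbsMeasure_rpow_le hK hL ha ha' hs)) ht
  simpa [hzeroK, hzeroL] using chord

theorem stmt_6_general (hV : IsConvexHomogeneous p V) (hK : IsPointedConvexBody K)
    (hL : IsPointedConvexBody L) {d α : ℝ} (hd : d = finrank ℝ E)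
    (hα : α = (1 / d) * exp ((p - 1) * d / p) * ((p - 1) * d / p) ^ (d / p) *
      uiGamma (1 - d / p) ((p - 1) * d / p))
    {lam : ℝ} (hlam : lam ∈ Icc (0 : ℝ) 1) :
    lam * (gibbsMeasure μ V).real K ^ α + (1 - lam) * (gibbsMeasure μ V).real L ^ α ≤
      (gibbsMeasure μ V).real (lam • K + (1 - lam) • L) ^ α := by
  have hd_pos : 0 < d := by rw [hd]; exact_mod_cast finrank_pos
  rw [← concavityExponent_eq_uiGamma hd_pos hV.one_lt] at hα
  have hα_pos : 0 < α := hα ▸ concavityExponent_pos hd_pos hV.one_lt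
  have ht : 1 - lam ∈ Icc (0 : ℝ) 1 := ⟨sub_nonneg.2 hlam.2, sub_le_self _ hlam.1⟩
  have body := hK.sub_smul_add_smul hL ht
  have chord_of_lt {a : ℝ} (ha : a ∈ Ioo 0 α) :=
    hV.gibbsMeasure_rpow_chord_le_of_lt (μ := μ) hK hL ha.1 (hd ▸ hα ▸ ha.2) ht
  rw [sub_sub_cancel] at body
  simp only [sub_sub_cancel] at chord_of_lt
  have rpow_tendsto {A : Set E} (hA : IsPointedConvexBody A) :
      Tendsto (fun a => (gibbsMeasure μ V).real A ^ a) (𝓝[<] α)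
        (𝓝 ((gibbsMeasure μ V).real A ^ α)) :=
    (Real.continuousAt_const_rpow (hV.gibbsMeasure_real_pos hA).ne').tendsto.mono_left
      nhdsWithin_le_nhds
  exact le_of_tendsto_of_tendsto (((rpow_tendsto hK).const_mul _).add
    ((rpow_tendsto hL).const_mul _)) (rpow_tendsto body)
    (eventually_of_mem (Ioo_mem_nhdsLT hα_pos) fun _ => chord_of_lt)

end BrunnMinkowski

theorem stmt_6 (n : ℕ) (hn : 2 ≤ n) (p : ℝ) (hp : 1 < p)
    (V : EuclideanSpace ℝ (Fin n) → ℝ)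
    (hVnn : ∀ x, 0 ≤ V x) (hVconv : ConvexOn ℝ Set.univ V)
    (hVhom : ∀ (x : EuclideanSpace ℝ (Fin n)) (c : ℝ), 0 < c → V (c • x) = c ^ p * V x)
    (μ : Measure (EuclideanSpace ℝ (Fin n)))
    (hμ : μ = volume.withDensity (fun x => ENNReal.ofReal (Real.exp (-V x))))
    (hfin : IsFiniteMeasure μ)
    (α : ℝ)
    (hα : α = (1 / (n : ℝ)) * Real.exp ((p - 1) * n / p) * ((p - 1) * n / p) ^ ((n : ℝ) / p) *
      uiGamma (1 - (n : ℝ) / p) ((p - 1) * n / p))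
    (K L : Set (EuclideanSpace ℝ (Fin n)))
    (hKc : IsCompact K) (hKv : Convex ℝ K) (hKi : (interior K).Nonempty) (hK0 : 0 ∈ K)
    (hLc : IsCompact L) (hLv : Convex ℝ L) (hLi : (interior L).Nonempty) (hL0 : 0 ∈ L)
    (lam : ℝ) (hlam : lam ∈ Set.Icc (0 : ℝ) 1) :
    lam * (μ K).toReal ^ α + (1 - lam) * (μ L).toReal ^ α ≤
      (μ (lam • K + (1 - lam) • L)).toReal ^ α := by
  have : Nontrivial (EuclideanSpace ℝ (Fin n)) :=
    nontrivial_of_finrank_pos (R := ℝ) (by rw [finrank_euclideanSpace_fin]; lia)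
  rw [hμ]
  exact stmt_6_general ⟨hp, hVconv, hVhom⟩ ⟨hKc.isBounded, hKv, hKi, hK0⟩
    ⟨hLc.isBounded, hLv, hLi, hL0⟩ (by rw [finrank_euclideanSpace_fin]) hα hlam
end

section
/- For every integer n ≥ 2, the limit as p → 1⁺ of (1/n) · e^{(p-1)n/p} · ((p-1)n/p)^{n/p} · Γ(1 - n/p, (p-1)n/p) equals 0. -/
open MeasureTheory Real Set Filter

/-!
For `x > 0` we have `x ^ a * Γ(1 - a, x) = ∫ t in (x, ∞), (x / t) ^ a * exp (-t)`, and `x / t ≤ 1`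
on the domain of integration, so this quantity decreases in `a`. Replacing `a` by a smaller exponent
`b ∈ (0, 1)` bounds it by `x ^ b * Γ(1 - b)`, which vanishes as `x → 0⁺`, uniformly in `a ≥ b`.
-/

open scoped Topology

theorem uiGamma_nonneg (s : ℝ) {x : ℝ} (hx : 0 ≤ x) : 0 ≤ uiGamma s x :=
  setIntegral_nonneg measurableSet_Ioi fun _ ht =>
    mul_nonneg (rpow_nonneg (hx.trans ht.le) _) (exp_pos _).le

theorem uiGamma_le_Gamma {s x : ℝ} (hs : 0 < s) (hx : 0 ≤ x) : uiGamma s x ≤ Gamma s := by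
  simp only [uiGamma, Gamma_eq_integral hs, mul_comm (_ ^ _)]
  refine setIntegral_mono_set (GammaIntegral_convergent hs) ?_ (Ioi_subset_Ioi hx).eventuallyLE
  filter_upwards [ae_restrict_mem measurableSet_Ioi] with t ht
  exact mul_nonneg (exp_pos _).le (rpow_nonneg (mem_Ioi.mp ht).le _)

theorem integrableOn_Ioi_rpow_mul_exp_neg (s : ℝ) {x : ℝ} (hx : 0 < x) :
    IntegrableOn (fun t : ℝ => t ^ s * exp (-t)) (Ioi x) := by
  simp only [mul_comm (_ ^ _)]
  refine integrable_of_isBigO_exp_neg one_half_pos ?_ (Gamma_integrand_isLittleO s).isBigO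
  exact continuousOn_id.neg.rexp.mul
    (continuousOn_id.rpow_const fun t ht => Or.inl (hx.trans_le ht).ne')

theorem antitone_rpow_mul_uiGamma_one_sub {x : ℝ} (hx : 0 < x) :
    Antitone fun a : ℝ => x ^ a * uiGamma (1 - a) x := by
  intro b a hba
  simp only [uiGamma, ← integral_const_mul]
  refine setIntegral_mono_on ((integrableOn_Ioi_rpow_mul_exp_neg _ hx).const_mul _)
    ((integrableOn_Ioi_rpow_mul_exp_neg _ hx).const_mul _) measurableSet_Ioi fun t hxt => ?_
  have ht : 0 < t := hx.trans hxt
  have rpow_mul_rpow (c : ℝ) : x ^ c * t ^ (1 - c - 1) = (x / t) ^ c := by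
    rw [sub_sub_cancel_left, rpow_neg ht.le, div_rpow hx.le ht.le, div_eq_mul_inv]
  simp only [← mul_assoc, rpow_mul_rpow]
  gcongr ?_ * _
  exact rpow_le_rpow_of_exponent_ge (div_pos hx ht) ((div_le_one ht).mpr hxt.le) hba

theorem rpow_mul_uiGamma_one_sub_le {a b x : ℝ} (hb : b < 1) (hba : b ≤ a) (hx : 0 < x) :
    x ^ a * uiGamma (1 - a) x ≤ x ^ b * Gamma (1 - b) :=
  (antitone_rpow_mul_uiGamma_one_sub hx hba).trans <|
    mul_le_mul_of_nonneg_left (uiGamma_le_Gamma (sub_pos.mpr hb) hx.le) (rpow_nonneg hx.le b)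

theorem tendsto_rpow_mul_uiGamma_one_sub {ι : Type*} {l : Filter ι} {a x : ι → ℝ} {b : ℝ}
    (hb : 0 < b) (ha : ∀ᶠ i in l, b ≤ a i) (hx : Tendsto x l (𝓝[>] 0)) :
    Tendsto (fun i => x i ^ a i * uiGamma (1 - a i) (x i)) l (𝓝 0) := by
  obtain ⟨c, hc, hcb⟩ : ∃ c, 0 < c ∧ c < min b 1 := exists_between (lt_min hb one_pos)
  obtain ⟨hcb, hc1⟩ := lt_min_iff.mp hcb
  obtain ⟨hx0, hxpos⟩ := tendsto_nhdsWithin_iff.mp hx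
  have bound_tendsto : Tendsto (fun i => x i ^ c * Gamma (1 - c)) l (𝓝 0) := by
    simpa [zero_rpow hc.ne'] using (hx0.rpow_const (Or.inr hc.le)).mul_const (Gamma (1 - c))
  refine squeeze_zero' ?_ ?_ bound_tendsto
  · filter_upwards [hxpos] with i hi
    exact mul_nonneg (rpow_nonneg (mem_Ioi.mp hi).le _) (uiGamma_nonneg _ (mem_Ioi.mp hi).le)
  · filter_upwards [hxpos, ha] with i hi hai
    exact rpow_mul_uiGamma_one_sub_le hc1 (hcb.le.trans hai) hi

theorem tendsto_sub_one_mul_div_nhdsGT_zero {r : ℝ} (hr : 0 < r) :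
    Tendsto (fun p : ℝ => (p - 1) * r / p) (𝓝[>] 1) (𝓝[>] 0) := by
  refine tendsto_nhdsWithin_iff.mpr ⟨?_, ?_⟩
  · have continuousAt_one : ContinuousAt (fun p : ℝ => (p - 1) * r / p) 1 := by
      fun_prop (disch := norm_num)
    simpa using continuousAt_one.tendsto.mono_left nhdsWithin_le_nhds
  · filter_upwards [self_mem_nhdsWithin] with p hp
    exact div_pos (mul_pos (sub_pos.mpr hp) hr) (one_pos.trans hp)

theorem stmt_10_general {r : ℝ} (hr : 0 < r) :
    Tendsto (fun p : ℝ =>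
        (1 / r) * exp ((p - 1) * r / p) * ((p - 1) * r / p) ^ (r / p) *
          uiGamma (1 - r / p) ((p - 1) * r / p))
      (𝓝[>] 1) (𝓝 0) := by
  have hx := tendsto_sub_one_mul_div_nhdsGT_zero hr
  have half_le_exponent : ∀ᶠ p : ℝ in 𝓝[>] 1, r / 2 ≤ r / p := by
    filter_upwards [Ioo_mem_nhdsGT one_lt_two] with p hp
    exact div_le_div_of_nonneg_left hr.le (one_pos.trans hp.1) hp.2.le
  have prefactor_tendsto :
      Tendsto (fun p : ℝ => (1 / r) * exp ((p - 1) * r / p)) (𝓝[>] 1) (𝓝 (1 / r * exp 0)) :=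
    (hx.mono_right nhdsWithin_le_nhds).rexp.const_mul (1 / r)
  simpa only [mul_assoc, mul_zero] using
    prefactor_tendsto.mul (tendsto_rpow_mul_uiGamma_one_sub (half_pos hr) half_le_exponent hx)

theorem stmt_10 (n : ℕ) (hn : 2 ≤ n) :
    Filter.Tendsto (fun p : ℝ =>
        (1 / (n : ℝ)) * Real.exp ((p - 1) * n / p) * ((p - 1) * n / p) ^ ((n : ℝ) / p) *
          uiGamma (1 - (n : ℝ) / p) ((p - 1) * n / p))
      (nhdsWithin 1 (Set.Ioi 1)) (nhds 0) :=
  stmt_10_general (Nat.cast_pos.mpr (zero_lt_two.trans_le hn))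
end

section
/- Fix a real p > 1 and define, for integers n ≥ 2, f₁(n) = (1/n) · e^{(p-1)n/p} · ((p-1)n/p)^{n/p} · Γ(1 - n/p, (p-1)n/p). Then f₁(n) = (p-1)/(pn) + O(n^{-2}) as n → ∞; that is, there exists a constant C > 0 such that |f₁(n) - (p-1)/(pn)| ≤ C/n² for all sufficiently large n. -/
open MeasureTheory Real Set

/-!
Since `t ≥ x` on the domain of integration, `x Γ(s, x) ≤ Γ(s + 1, x)`. Inserting this into the
recurrence `Γ(s + 1, x) = s Γ(s, x) + x ^ s e ^ (-x)` at `s` and at `s - 1` gives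
`x ^ s e ^ (-x) / (x + 1 - s) ≤ Γ(s, x) ≤ x ^ s e ^ (-x) / (x - s)` for `s ≤ 1` and `s < x`.
For `s = 1 - n / p` and `x = (p - 1) n / p` the denominators are `n` and `n - 1`, so the two bounds
agree up to a relative error of order `1 / n`.
-/

open Filter Topology

section IncompleteGamma

variable {s x : ℝ}

lemma integrableOn_rpow_mul_exp_neg_Ioi (s : ℝ) (hx : 0 < x) :
    IntegrableOn (fun t : ℝ ↦ t ^ s * exp (-t)) (Ioi x) := by
  have hcont : ContinuousOn (fun t : ℝ ↦ t ^ s * exp (-t)) (Ici x) :=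
    (continuousOn_id.rpow_const fun t ht ↦ Or.inl (hx.trans_le ht).ne').mul (by fun_prop)
  refine integrable_of_isBigO_exp_neg one_half_pos hcont ?_
  simpa only [mul_comm] using (Gamma_integrand_isLittleO s).isBigO

lemma uiGamma_add_one (s : ℝ) (hx : 0 < x) :
    uiGamma (s + 1) x = s * uiGamma s x + x ^ s * exp (-x) := by
  have hderiv (t : ℝ) (ht : t ∈ Ici x) : HasDerivAt (fun t : ℝ ↦ t ^ s * exp (-t))
      (s * (t ^ (s - 1) * exp (-t)) - t ^ s * exp (-t)) t := by
    have hpow := hasDerivAt_rpow_const (p := s) (Or.inl (hx.trans_le ht).ne')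
    exact (hpow.mul (hasDerivAt_neg t).exp).congr_deriv (by ring)
  have hint₁ := (integrableOn_rpow_mul_exp_neg_Ioi (s - 1) hx).const_mul s
  have hint₂ := integrableOn_rpow_mul_exp_neg_Ioi s hx
  have hlim : Tendsto (fun t : ℝ ↦ t ^ s * exp (-t)) atTop (𝓝 0) := by
    simpa using tendsto_rpow_mul_exp_neg_mul_atTop_nhds_zero s 1 one_pos
  have hFTC := integral_Ioi_of_hasDerivAt_of_tendsto' hderiv (hint₁.sub hint₂) hlim
  rw [integral_sub hint₁ hint₂, integral_const_mul] at hFTC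
  simp only [uiGamma, add_sub_cancel_right]
  linarith

lemma mul_uiGamma_le_uiGamma_add_one (s : ℝ) (hx : 0 < x) :
    x * uiGamma s x ≤ uiGamma (s + 1) x := by
  simp only [uiGamma, add_sub_cancel_right, ← integral_const_mul]
  refine setIntegral_mono_on ((integrableOn_rpow_mul_exp_neg_Ioi (s - 1) hx).const_mul x)
    (integrableOn_rpow_mul_exp_neg_Ioi s hx) measurableSet_Ioi fun t (ht : x < t) ↦ ?_
  have ht₀ : 0 < t := hx.trans ht
  calc x * (t ^ (s - 1) * exp (-t)) ≤ t * (t ^ (s - 1) * exp (-t)) := by gcongr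
    _ = t ^ s * exp (-t) := by rw [rpow_sub_one ht₀.ne']; field_simp

lemma sub_mul_uiGamma_le_rpow_mul_exp_neg (s : ℝ) (hx : 0 < x) :
    (x - s) * uiGamma s x ≤ x ^ s * exp (-x) := by
  linarith [mul_uiGamma_le_uiGamma_add_one s hx, uiGamma_add_one s hx]

lemma rpow_mul_exp_neg_le_mul_uiGamma (hs : s ≤ 1) (hx : 0 < x) :
    x ^ s * exp (-x) ≤ (x + 1 - s) * uiGamma s x := by
  have hrec : uiGamma s x = (s - 1) * uiGamma (s - 1) x + x ^ (s - 1) * exp (-x) := by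
    simpa using uiGamma_add_one (s - 1) hx
  have hmono : x * uiGamma (s - 1) x ≤ uiGamma s x := by
    simpa using mul_uiGamma_le_uiGamma_add_one (s - 1) hx
  calc x ^ s * exp (-x) = x * (x ^ (s - 1) * exp (-x)) := by
        rw [rpow_sub_one hx.ne']; field_simp
    _ = x * uiGamma s x + (1 - s) * (x * uiGamma (s - 1) x) := by rw [hrec]; ring
    _ ≤ x * uiGamma s x + (1 - s) * uiGamma s x := by gcongr
    _ = (x + 1 - s) * uiGamma s x := by ring

lemma exp_mul_rpow_one_sub_mul_rpow_mul_exp_neg (s : ℝ) (hx : 0 < x) :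
    exp x * x ^ (1 - s) * (x ^ s * exp (-x)) = x := by
  calc exp x * x ^ (1 - s) * (x ^ s * exp (-x))
      = (exp x * exp (-x)) * (x ^ (1 - s) * x ^ s) := by ring
    _ = x := by simp [← exp_add, ← rpow_add hx]

lemma div_le_exp_mul_rpow_mul_uiGamma (hs : s ≤ 1) (hx : 0 < x) :
    x / (x + 1 - s) ≤ exp x * x ^ (1 - s) * uiGamma s x := by
  rw [div_le_iff₀ (by linarith)]
  calc x = exp x * x ^ (1 - s) * (x ^ s * exp (-x)) :=
        (exp_mul_rpow_one_sub_mul_rpow_mul_exp_neg s hx).symm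
    _ ≤ exp x * x ^ (1 - s) * ((x + 1 - s) * uiGamma s x) := by
        gcongr _ * ?_
        exact rpow_mul_exp_neg_le_mul_uiGamma hs hx
    _ = exp x * x ^ (1 - s) * uiGamma s x * (x + 1 - s) := by ring

lemma exp_mul_rpow_mul_uiGamma_le_div (hx : 0 < x) (hsx : s < x) :
    exp x * x ^ (1 - s) * uiGamma s x ≤ x / (x - s) := by
  rw [le_div_iff₀ (sub_pos.2 hsx)]
  calc exp x * x ^ (1 - s) * uiGamma s x * (x - s)
      = exp x * x ^ (1 - s) * ((x - s) * uiGamma s x) := by ring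
    _ ≤ exp x * x ^ (1 - s) * (x ^ s * exp (-x)) := by
        gcongr _ * ?_
        exact sub_mul_uiGamma_le_rpow_mul_exp_neg s hx
    _ = x := exp_mul_rpow_one_sub_mul_rpow_mul_exp_neg s hx

lemma abs_exp_mul_rpow_mul_uiGamma_one_sub_sub_le {a : ℝ} (ha : 0 ≤ a) (hx : 0 < x)
    (hxa : 1 < x + a) :
    |exp x * x ^ a * uiGamma (1 - a) x - x / (x + a)| ≤ x / ((x + a) * (x + a - 1)) := by
  have hlower : x / (x + a) ≤ exp x * x ^ a * uiGamma (1 - a) x := by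
    convert div_le_exp_mul_rpow_mul_uiGamma (s := 1 - a) (by linarith) hx using 2 <;> ring_nf
  have hupper : exp x * x ^ a * uiGamma (1 - a) x ≤ x / (x + a - 1) := by
    convert exp_mul_rpow_mul_uiGamma_le_div (s := 1 - a) hx (by linarith) using 2 <;> ring_nf
  have hpos : 0 < x + a - 1 := sub_pos.2 hxa
  rw [abs_of_nonneg (sub_nonneg.2 hlower)]
  calc exp x * x ^ a * uiGamma (1 - a) x - x / (x + a)
      ≤ x / (x + a - 1) - x / (x + a) := by gcongr
    _ = x / ((x + a) * (x + a - 1)) := by field_simp; ring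

end IncompleteGamma

theorem stmt_13 (p : ℝ) (hp : 1 < p) :
    ∃ C > (0 : ℝ), ∃ N : ℕ, 2 ≤ N ∧ ∀ n : ℕ, N ≤ n →
      |(1 / (n : ℝ)) * Real.exp ((p - 1) * n / p) * ((p - 1) * n / p) ^ ((n : ℝ) / p) *
          uiGamma (1 - (n : ℝ) / p) ((p - 1) * n / p) - (p - 1) / (p * n)| ≤ C / (n : ℝ) ^ 2 := by
  refine ⟨2, two_pos, 2, le_rfl, fun n hn ↦ ?_⟩
  have hn : (2 : ℝ) ≤ n := mod_cast hn
  have hp₁ : 0 < p - 1 := sub_pos.2 hp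
  have hn₁ : 0 < (n : ℝ) - 1 := by linarith
  set a : ℝ := n / p with ha
  set x : ℝ := (p - 1) * n / p with hx
  have ha₀ : 0 < a := by positivity
  have hx₀ : 0 < x := by positivity
  have hxa : x + a = n := by rw [hx, ha]; field_simp; ring
  have hx_le : x ≤ 2 * (n - 1) := by linarith
  have hmain : (p - 1) / (p * n) = 1 / n * (x / n) := by rw [hx]; field_simp
  have hbound := abs_exp_mul_rpow_mul_uiGamma_one_sub_sub_le ha₀.le hx₀ (by linarith)
  rw [hxa] at hbound
  calc |1 / n * exp x * x ^ a * uiGamma (1 - a) x - (p - 1) / (p * n)|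
      = 1 / n * |exp x * x ^ a * uiGamma (1 - a) x - x / n| := by
        rw [hmain, mul_assoc, mul_assoc, ← mul_sub, abs_mul, abs_of_nonneg (by positivity),
          mul_assoc]
    _ ≤ 1 / n * (x / (n * (n - 1))) := by gcongr
    _ ≤ 1 / n * (2 * (n - 1) / (n * (n - 1))) := by gcongr
    _ = 2 / n ^ 2 := by field_simp
end

section
/- Fix a real p ≥ 1 and define, for integers n ≥ 2, f₂(n) = 1 - (p/(n-1)) · Γ(n/p) · Γ((n+p-2)/p) / Γ((n-1)/p)². Then f₂(n) = (p-1)/(pn) + O(n^{-2}) as n → ∞; that is, there exists a constant C > 0 such that |f₂(n) - (p-1)/(pn)| ≤ C/n² for all sufficiently large n. -/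
open MeasureTheory Real Set

/-!
With `a = 1 / p` and `x = (n - 1) / p` the subtracted term of `f₂(n)` is the quotient
`R x = Γ(x + a) Γ(x + 1 - a) / (Γ(x) Γ(x + 1))`. The functional equation gives
`R (x + 1) = R x * (1 + c / (x (x + 1)))` with `c = a (1 - a)`, and log-convexity of `Γ` gives
`R → 1` at infinity. Hence under `x ↦ x + 1` the function `R x * (1 + c / x)` increases to `1` and
`R x + c / x` decreases to `1`, so that `c / (x + c) ≤ 1 - R x ≤ c / x`. In the original variables
`1 - R` lies between `(p - 1) / (p n)` and `(p - 1) / (p (n - 1))`.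
-/

open Filter Topology

section ShiftMonotone

variable {α : Type*} [TopologicalSpace α] [Preorder α] {f : ℝ → α} {x : ℝ} {l : α}

theorem le_of_tendsto_of_le_add_one [ClosedIciTopology α] (hf : ∀ y ≥ x, f y ≤ f (y + 1))
    (hlim : Tendsto f atTop (𝓝 l)) : f x ≤ l := by
  have hmono : Monotone fun n : ℕ => f (x + n) := monotone_nat_of_le_succ fun n => by
    simpa only [Nat.cast_succ, add_assoc] using hf (x + n) (by simp)
  have hshift : Tendsto (fun n : ℕ => x + (n : ℝ)) atTop atTop :=
    tendsto_atTop_add_const_left _ _ tendsto_natCast_atTop_atTop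
  exact ge_of_tendsto' (hlim.comp hshift) fun n => by simpa using hmono n.zero_le

theorem ge_of_tendsto_of_add_one_le [ClosedIicTopology α] (hf : ∀ y ≥ x, f (y + 1) ≤ f y)
    (hlim : Tendsto f atTop (𝓝 l)) : l ≤ f x :=
  le_of_tendsto_of_le_add_one (α := αᵒᵈ) hf hlim

end ShiftMonotone

theorem Gamma_mul_Gamma_le_of_convex_combination {s t a b : ℝ} (hs : 0 < s) (ht : 0 < t)
    (ha : 0 ≤ a) (hb : 0 ≤ b) (hab : a + b = 1) :
    Gamma (a * s + b * t) * Gamma (b * s + a * t) ≤ Gamma s * Gamma t := by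
  have hΓs := Gamma_pos_of_pos hs
  have hΓt := Gamma_pos_of_pos ht
  have hΓu : 0 < Gamma (a * s + b * t) :=
    Gamma_pos_of_pos (convex_Ioi (0 : ℝ) hs ht ha hb hab)
  have hΓv : 0 < Gamma (b * s + a * t) :=
    Gamma_pos_of_pos (convex_Ioi (0 : ℝ) hs ht hb ha (by linarith))
  have hu := convexOn_log_Gamma.2 hs ht ha hb hab
  have hv := convexOn_log_Gamma.2 hs ht hb ha (by linarith)
  simp only [Function.comp_apply, smul_eq_mul] at hu hv
  rw [← log_le_log_iff (by positivity) (by positivity), log_mul hΓu.ne' hΓv.ne',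
    log_mul hΓs.ne' hΓt.ne']
  linear_combination hu + hv + (log (Gamma s) + log (Gamma t)) * hab

/-- The quotient `Γ(x + a) Γ(x + 1 - a) / (Γ(x) Γ(x + 1))`, which compares the values of `Γ` at two
points placed symmetrically about `x + 1 / 2` with its values at `x` and `x + 1`. -/
noncomputable def gammaQuotient (a x : ℝ) : ℝ :=
  Gamma (x + a) * Gamma (x + 1 - a) / (Gamma x * Gamma (x + 1))

namespace gammaQuotient

variable {a x : ℝ}

theorem add_one (hx : 0 < x) (hxa : 0 < x + a) (hxa₁ : 0 < x + 1 - a) :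
    gammaQuotient a (x + 1) = gammaQuotient a x * (1 + a * (1 - a) / (x * (x + 1))) := by
  have hΓa : Gamma (x + 1 + a) = (x + a) * Gamma (x + a) := by
    rw [add_right_comm, Gamma_add_one hxa.ne']
  have hΓa₁ : Gamma (x + 1 + 1 - a) = (x + 1 - a) * Gamma (x + 1 - a) := by
    rw [add_sub_right_comm, Gamma_add_one hxa₁.ne']
  have hx₁ : 0 < x + 1 := add_pos hx one_pos
  simp only [gammaQuotient, hΓa, hΓa₁, Gamma_add_one hx₁.ne', Gamma_add_one hx.ne']
  field_simp
  ring

theorem pos (hx : 0 < x) (hxa : 0 < x + a) (hxa₁ : 0 < x + 1 - a) : 0 < gammaQuotient a x :=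
  div_pos (mul_pos (Gamma_pos_of_pos hxa) (Gamma_pos_of_pos hxa₁))
    (mul_pos (Gamma_pos_of_pos hx) (Gamma_pos_of_pos (add_pos hx one_pos)))

theorem le_one (ha₀ : 0 ≤ a) (ha₁ : a ≤ 1) (hx : 0 < x) : gammaQuotient a x ≤ 1 := by
  have hΓx := Gamma_pos_of_pos hx
  have hΓx₁ := Gamma_pos_of_pos (add_pos hx one_pos)
  have hconv := Gamma_mul_Gamma_le_of_convex_combination hx (add_pos hx one_pos)
    (sub_nonneg.2 ha₁) ha₀ (sub_add_cancel 1 a)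
  have hleft : (1 - a) * x + a * (x + 1) = x + a := by ring
  have hright : a * x + (1 - a) * (x + 1) = x + 1 - a := by ring
  rw [hleft, hright] at hconv
  exact (div_le_one (mul_pos hΓx hΓx₁)).2 hconv

-- Log-convexity with `x + 1` as the midpoint of `x + a` and `x + 2 - a`.
theorem div_add_one_sub_le (hx : 0 < x) (hxa : 0 < x + a) (hxa₁ : 0 < x + 1 - a) :
    x / (x + 1 - a) ≤ gammaQuotient a x := by
  have hΓx := Gamma_pos_of_pos hx
  have hden : 0 < Gamma x * (x * Gamma x) := mul_pos hΓx (mul_pos hx hΓx)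
  have hmid : Gamma (x + 1) * Gamma (x + 1) ≤ Gamma (x + a) * Gamma (x + 1 - a + 1) := by
    convert Gamma_mul_Gamma_le_of_convex_combination hxa (add_pos hxa₁ one_pos)
      one_half_pos.le one_half_pos.le (add_halves 1) using 3 <;> ring
  rw [Gamma_add_one hx.ne', Gamma_add_one hxa₁.ne'] at hmid
  rw [gammaQuotient, Gamma_add_one hx.ne', div_le_div_iff₀ hxa₁ hden]
  linarith

theorem tendsto_atTop_one (ha₀ : 0 ≤ a) (ha₁ : a ≤ 1) :
    Tendsto (gammaQuotient a) atTop (𝓝 1) := by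
  have hlower : Tendsto (fun x : ℝ => 1 - (1 - a) / (x + (1 - a))) atTop (𝓝 1) := by
    simpa using ((tendsto_atTop_add_const_right _ (1 - a) tendsto_id).const_div_atTop
      (1 - a)).const_sub 1
  refine tendsto_of_tendsto_of_tendsto_of_le_of_le' hlower tendsto_const_nhds ?_ ?_
  · filter_upwards [eventually_gt_atTop 0] with x hx
    have hxa₁ : 0 < x + 1 - a := by linarith
    calc 1 - (1 - a) / (x + (1 - a)) = x / (x + 1 - a) := by
          rw [← add_sub_assoc]
          field_simp
          ring
      _ ≤ gammaQuotient a x := div_add_one_sub_le hx (by linarith) hxa₁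
  · filter_upwards [eventually_gt_atTop 0] with x hx using le_one ha₀ ha₁ hx

theorem mul_one_add_div_le_one (ha₀ : 0 ≤ a) (ha₁ : a ≤ 1) (hx : 0 < x) :
    gammaQuotient a x * (1 + a * (1 - a) / x) ≤ 1 := by
  refine le_of_tendsto_of_le_add_one (f := fun y => gammaQuotient a y * (1 + a * (1 - a) / y))
    (fun y hxy => ?_) ?_
  · have hy : 0 < y := hx.trans_le hxy
    have hR : 0 < gammaQuotient a y := pos hy (by linarith) (by linarith)
    have hfactor : (1 + a * (1 - a) / (y * (y + 1))) * (1 + a * (1 - a) / (y + 1)) =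
        1 + a * (1 - a) / y + (a * (1 - a)) ^ 2 / (y * (y + 1) ^ 2) := by
      field_simp
      ring
    rw [add_one hy (by linarith) (by linarith), mul_assoc, hfactor]
    exact mul_le_mul_of_nonneg_left (le_add_of_nonneg_right (by positivity)) hR.le
  · simpa using (tendsto_atTop_one ha₀ ha₁).mul
      ((tendsto_id.const_div_atTop (a * (1 - a))).const_add 1)

theorem one_le_add_div (ha₀ : 0 ≤ a) (ha₁ : a ≤ 1) (hx : 0 < x) :
    1 ≤ gammaQuotient a x + a * (1 - a) / x := by
  refine ge_of_tendsto_of_add_one_le (f := fun y => gammaQuotient a y + a * (1 - a) / y)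
    (fun y hxy => ?_) ?_
  · have hy : 0 < y := hx.trans_le hxy
    have hc : 0 ≤ a * (1 - a) / (y * (y + 1)) :=
      div_nonneg (mul_nonneg ha₀ (sub_nonneg.2 ha₁)) (by positivity)
    have htelescope : a * (1 - a) / y = a * (1 - a) / (y * (y + 1)) + a * (1 - a) / (y + 1) := by
      field_simp
      ring
    have hR := mul_le_of_le_one_left hc (le_one ha₀ ha₁ hy)
    rw [add_one hy (by linarith) (by linarith)]
    linarith
  · simpa using (tendsto_atTop_one ha₀ ha₁).add (tendsto_id.const_div_atTop (a * (1 - a)))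

theorem one_sub_mem_Icc (ha₀ : 0 ≤ a) (ha₁ : a ≤ 1) (hx : 0 < x) :
    1 - gammaQuotient a x ∈ Icc (a * (1 - a) / (x + a * (1 - a))) (a * (1 - a) / x) := by
  have hc : 0 ≤ a * (1 - a) := mul_nonneg ha₀ (sub_nonneg.2 ha₁)
  have hxc : 0 < x + a * (1 - a) := by linarith
  constructor
  · have hupper : gammaQuotient a x ≤ x / (x + a * (1 - a)) := by
      have hmul := mul_one_add_div_le_one ha₀ ha₁ hx
      rwa [one_add_div hx.ne', ← mul_div_assoc, div_le_one hx, ← le_div_iff₀ hxc] at hmul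
    have hcompl : a * (1 - a) / (x + a * (1 - a)) = 1 - x / (x + a * (1 - a)) := by
      field_simp
      ring
    linarith
  · linarith [one_le_add_div ha₀ ha₁ hx]

theorem apply_one_div_eq {p x : ℝ} (hp : p ≠ 0) (hx : x ≠ 1) :
    gammaQuotient (1 / p) ((x - 1) / p) =
      p / (x - 1) * (Gamma (x / p) * Gamma ((x + p - 2) / p) / Gamma ((x - 1) / p) ^ 2) := by
  have hx₁ : x - 1 ≠ 0 := sub_ne_zero.2 hx
  have hleft : (x - 1) / p + 1 / p = x / p := by ring
  have hright : (x - 1) / p + 1 - 1 / p = (x + p - 2) / p := by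
    field_simp
    ring
  rw [gammaQuotient, Gamma_add_one (div_ne_zero hx₁ hp), hleft, hright]
  field_simp

theorem one_sub_apply_one_div_mem_Icc {p x : ℝ} (hp : 1 ≤ p) (hx : 1 < x) :
    1 - gammaQuotient (1 / p) ((x - 1) / p) ∈
      Icc ((p - 1) / (p * x)) ((p - 1) / (p * (x - 1))) := by
  have hp₀ : 0 < p := by linarith
  have hx₁ : 0 < x - 1 := sub_pos.2 hx
  obtain ⟨hlower, hupper⟩ := one_sub_mem_Icc (one_div_nonneg.2 hp₀.le)
    ((div_le_one hp₀).2 hp) (div_pos hx₁ hp₀)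
  have hc : 1 / p * (1 - 1 / p) = (p - 1) / p ^ 2 := by field_simp
  have hden : (x - 1) / p + (p - 1) / p ^ 2 = (p * x - 1) / p ^ 2 := by
    field_simp
    ring
  have hpx : 0 < p * x - 1 := by nlinarith
  rw [hc] at hlower hupper
  rw [hden, div_div_div_cancel_right₀ (by positivity)] at hlower
  refine ⟨le_trans ?_ hlower, hupper.trans_eq (by field_simp)⟩
  exact div_le_div_of_nonneg_left (by linarith) hpx (by linarith)

end gammaQuotient

theorem stmt_14_general {p x : ℝ} (hp : 1 ≤ p) (hx : 2 ≤ x) :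
    |(1 - p / (x - 1) * (Gamma (x / p) * Gamma ((x + p - 2) / p) / Gamma ((x - 1) / p) ^ 2)) -
      (p - 1) / (p * x)| ≤ 2 / x ^ 2 := by
  have hp₀ : 0 < p := by linarith
  have hx₁ : 0 < x - 1 := by linarith
  rw [← gammaQuotient.apply_one_div_eq hp₀.ne' (by linarith : 1 < x).ne']
  obtain ⟨hlower, hupper⟩ := gammaQuotient.one_sub_apply_one_div_mem_Icc hp (by linarith : 1 < x)
  rw [abs_of_nonneg (sub_nonneg.2 hlower)]
  calc 1 - gammaQuotient (1 / p) ((x - 1) / p) - (p - 1) / (p * x)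
      ≤ (p - 1) / (p * (x - 1)) - (p - 1) / (p * x) := by gcongr
    _ = (p - 1) / p * (1 / ((x - 1) * x)) := by
      field_simp
      ring
    _ ≤ 1 * (2 / x ^ 2) := by
      gcongr ?_ * ?_
      · exact (div_le_one hp₀).2 (by linarith)
      · rw [div_le_div_iff₀ (by positivity) (by positivity)]
        nlinarith
    _ = 2 / x ^ 2 := one_mul _

theorem stmt_14 (p : ℝ) (hp : 1 ≤ p) :
    ∃ C > (0 : ℝ), ∃ N : ℕ, 2 ≤ N ∧ ∀ n : ℕ, N ≤ n →
      |(1 - p / ((n : ℝ) - 1) * (Real.Gamma ((n : ℝ) / p) * Real.Gamma (((n : ℝ) + p - 2) / p) /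
          Real.Gamma (((n : ℝ) - 1) / p) ^ 2)) - (p - 1) / (p * n)| ≤ C / (n : ℝ) ^ 2 :=
  ⟨2, two_pos, 2, le_rfl, fun _ hn => stmt_14_general hp (by exact_mod_cast hn)⟩
end

section
/- Fix an integer n ≥ 2 and define, for real p ≥ 1, g₂(p) = 1 - (p/(n-1)) · Γ(n/p) · Γ((n+p-2)/p) / Γ((n-1)/p)². Then g₂(p) = 1/n + O(p^{-2}) as p → ∞; that is, there exists a constant C > 0 such that |g₂(p) - 1/n| ≤ C/p² for all sufficiently large p. -/
open MeasureTheory Real Set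

/-!
By `Γ(1 + s) = s Γ(s)`, the difference `1 - g₂(p)` is `(n - 1) / n` times
`Γ(1 + n t) Γ(1 + (n - 2) t) / Γ(1 + (n - 1) t) ^ 2` with `t = 1 / p`. This last quotient is
analytic in `t` near `0` and equals `1` at `t = 0`. Its derivative there vanishes because
`n + (n - 2) = 2 (n - 1)`, so it is `1 + O(t ^ 2)`.
-/

open Asymptotics Filter Topology

section Taylor

variable {𝕜 E F : Type*} [NontriviallyNormedField 𝕜] [NormedAddCommGroup E] [NormedSpace 𝕜 E]
  [NormedAddCommGroup F] [NormedSpace 𝕜 F]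

theorem isBigO_sub_sub_fderiv_norm_sq {f : E → F} {x : E} (hf : AnalyticAt 𝕜 f x) :
    (fun y ↦ f (x + y) - f x - fderiv 𝕜 f x y) =O[𝓝 0] fun y ↦ ‖y‖ ^ 2 := by
  obtain ⟨q, hq⟩ := hf
  refine (hq.isBigO_sub_partialSum_pow 2).congr_left fun y ↦ ?_
  have hlinear : fderiv 𝕜 f x y = q 1 fun _ ↦ y := by
    rw [hq.fderiv_eq, continuousMultilinearCurryFin1_apply]
    exact congrArg (q 1) (funext <| Fin.forall_fin_one.mpr rfl)
  simp [FormalMultilinearSeries.partialSum, Finset.sum_range_succ, hq.coeff_zero, hlinear, sub_sub]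

theorem hasDerivAt_comp_const_add_mul_zero {f : 𝕜 → F} {x : 𝕜} {f' : F} (hf : HasDerivAt f f' x)
    (c : 𝕜) : HasDerivAt (fun t ↦ f (x + c * t)) (c • f') 0 := by
  have hline : HasDerivAt (fun t ↦ x + c * t) c 0 := by
    simpa using ((hasDerivAt_id (0 : 𝕜)).const_mul c).const_add x
  exact HasDerivAt.scomp (0 : 𝕜) (by simpa using hf) hline

variable {f : 𝕜 → 𝕜} {x a b c : 𝕜}

theorem hasDerivAt_mul_div_sq_zero (hf : DifferentiableAt 𝕜 f x) (hfx : f x ≠ 0)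
    (habc : a + b = 2 * c) :
    HasDerivAt (fun t ↦ f (x + a * t) * f (x + b * t) / f (x + c * t) ^ 2) 0 0 := by
  have hderiv := hasDerivAt_comp_const_add_mul_zero hf.hasDerivAt
  refine (((hderiv a).fun_mul (hderiv b)).fun_div ((hderiv c).fun_pow 2)
    (by simpa using hfx)).congr_deriv ?_
  simp only [mul_zero, add_zero, smul_eq_mul]
  field_simp
  linear_combination f x * deriv f x * habc

theorem isBigO_mul_div_sq_sub_one (hf : AnalyticAt 𝕜 f x) (hfx : f x ≠ 0)
    (habc : a + b = 2 * c) :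
    (fun t ↦ f (x + a * t) * f (x + b * t) / f (x + c * t) ^ 2 - 1)
      =O[𝓝 0] fun t ↦ t ^ 2 := by
  have hline (d : 𝕜) : AnalyticAt 𝕜 (fun t ↦ f (x + d * t)) 0 :=
    AnalyticAt.fun_comp (g := f) (by simpa using hf) (by fun_prop)
  have hquot : AnalyticAt 𝕜 (fun t ↦ f (x + a * t) * f (x + b * t) / f (x + c * t) ^ 2) 0 :=
    ((hline a).fun_mul (hline b)).fun_div ((hline c).fun_pow 2) (by simpa using hfx)
  have hderiv := hasDerivAt_mul_div_sq_zero hf.differentiableAt hfx habc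
  have htaylor := isBigO_sub_sub_fderiv_norm_sq hquot
  simp only [← norm_pow, isBigO_norm_right, hderiv.hasFDerivAt.fderiv] at htaylor
  refine htaylor.congr_left fun t ↦ ?_
  simp [← sq, hfx]

end Taylor

section Gamma

theorem analyticAt_complexGamma {s : ℂ} (hs : ∀ m : ℕ, s ≠ -m) : AnalyticAt ℂ Complex.Gamma s := by
  simpa using (Complex.differentiable_one_div_Gamma.analyticAt s).fun_inv
    (inv_ne_zero (Complex.Gamma_ne_zero hs))

theorem analyticAt_realGamma {x : ℝ} (hx : ∀ m : ℕ, x ≠ -m) : AnalyticAt ℝ Real.Gamma x :=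
  (analyticAt_complexGamma fun m ↦ mod_cast hx m).re_ofReal

variable {a p : ℝ}

theorem div_sub_one_mul_Gamma_quotient (ha₀ : a ≠ 0) (ha₁ : a ≠ 1) (hp : p ≠ 0) :
    p / (a - 1) * (Gamma (a / p) * Gamma ((a + p - 2) / p) / Gamma ((a - 1) / p) ^ 2) =
      (a - 1) / a *
        (Gamma (1 + a * p⁻¹) * Gamma (1 + (a - 2) * p⁻¹) / Gamma (1 + (a - 1) * p⁻¹) ^ 2) := by
  have ha₁' : a - 1 ≠ 0 := sub_ne_zero.mpr ha₁
  have hshift {c : ℝ} (hc : c ≠ 0) : Gamma (1 + c * p⁻¹) = c / p * Gamma (c / p) := by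
    rw [← Gamma_add_one (div_ne_zero hc hp), add_comm, div_eq_mul_inv]
  have harg : (a + p - 2) / p = 1 + (a - 2) * p⁻¹ := by field_simp; ring
  rw [harg, hshift ha₀, hshift ha₁']
  field_simp

end Gamma

theorem exists_forall_abs_le_div_pow_of_isBigO {f : ℝ → ℝ} {k : ℕ}
    (hf : f =O[atTop] fun p ↦ (p ^ k)⁻¹) :
    ∃ C > 0, ∃ P : ℝ, 1 ≤ P ∧ ∀ p, P ≤ p → |f p| ≤ C / p ^ k := by
  obtain ⟨C, hC, hbound⟩ := hf.exists_pos
  obtain ⟨P, hP⟩ := eventually_atTop.mp hbound.bound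
  refine ⟨C, hC, max 1 P, le_max_left 1 P, fun p hp ↦ ?_⟩
  have hp₀ : 0 ≤ p := zero_le_one.trans ((le_max_left 1 P).trans hp)
  simpa [abs_of_nonneg hp₀, div_eq_mul_inv] using hP p ((le_max_right 1 P).trans hp)

theorem stmt_16_general {a : ℝ} (ha₀ : a ≠ 0) (ha₁ : a ≠ 1) :
    (fun p ↦ (1 - p / (a - 1) * (Gamma (a / p) * Gamma ((a + p - 2) / p) /
      Gamma ((a - 1) / p) ^ 2)) - 1 / a) =O[atTop] fun p ↦ (p ^ 2)⁻¹ := by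
  have hGamma : AnalyticAt ℝ Gamma 1 :=
    analyticAt_realGamma fun m ↦ by linarith [m.cast_nonneg (α := ℝ)]
  have hquot := isBigO_mul_div_sq_sub_one hGamma (by simp)
    (show a + (a - 2) = 2 * (a - 1) by ring)
  have hinv := (hquot.comp_tendsto tendsto_inv_atTop_zero).const_mul_left (-((a - 1) / a))
  refine hinv.congr' ?_ (.of_forall fun p ↦ inv_pow p 2)
  filter_upwards [eventually_ne_atTop 0] with p hp
  rw [div_sub_one_mul_Gamma_quotient ha₀ ha₁ hp, Function.comp_apply]
  field_simp
  ring

theorem stmt_16 (n : ℕ) (hn : 2 ≤ n) :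
    ∃ C > (0 : ℝ), ∃ P : ℝ, 1 ≤ P ∧ ∀ p : ℝ, P ≤ p →
      |(1 - p / ((n : ℝ) - 1) * (Real.Gamma ((n : ℝ) / p) * Real.Gamma (((n : ℝ) + p - 2) / p) /
          Real.Gamma (((n : ℝ) - 1) / p) ^ 2)) - 1 / (n : ℝ)| ≤ C / p ^ 2 :=
  exists_forall_abs_le_div_pow_of_isBigO <|
    stmt_16_general (by norm_cast; lia) (by norm_cast; lia)
end
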